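/- arXiv:2109.06943 — 2 statements merged into one kernel-verified Lean document; each statement's English description precedes it below -/
import Mathlib

section
/- Let Ω ⊂ ℝⁿ be a hyperbolic domain (its minimal pseudodistance ρ_Ω is a distance inducing the topology of Ω) and let f : D* → Ω be a conformal harmonic map from the punctured disc D* = {0 < |z| < 1}. If there is a sequence z_k → 0 in D* with f(z_k) → p ∈ Ω, then f extends to a conformal harmonic map D → Ω (Kwack-type extension theorem for minimal discs). -/
open Metric RealInnerProductSpace Filter

/-- The (vector-valued) Laplacian of a map `f : ℂ → ℝⁿ`. -/
noncomputable def lapV (n : ℕ) (f : ℂ → EuclideanSpace ℝ (Fin n)) (z : ℂ) :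
    EuclideanSpace ℝ (Fin n) :=
  fderiv ℝ (fun w => fderiv ℝ f w 1) z 1 +
  fderiv ℝ (fun w => fderiv ℝ f w Complex.I) z Complex.I

/-- A map `f : ℂ → ℝⁿ` is conformal harmonic on a set `s` if it is `C²`, harmonic, and
`|f_x| = |f_y|`, `f_x · f_y = 0` on `s`. -/
def ConformalHarmonicOn (n : ℕ) (f : ℂ → EuclideanSpace ℝ (Fin n)) (s : Set ℂ) : Prop :=
  ContDiffOn ℝ 2 f s ∧ (∀ z ∈ s, lapV n f z = 0) ∧
  ∀ z ∈ s, ‖fderiv ℝ f z 1‖ = ‖fderiv ℝ f z Complex.I‖ ∧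
    ⟪fderiv ℝ f z 1, fderiv ℝ f z Complex.I⟫ = 0

/-- The minimal (Kobayashi-type) pseudometric of a domain `Ω ⊆ ℝⁿ`:
`g_Ω(x, u) = inf {1/r : ∃ conformal harmonic f : D → Ω, f(0) = x, f_x(0) = r u}`. -/
noncomputable def minMetric (n : ℕ) (Ω : Set (EuclideanSpace ℝ (Fin n)))
    (x u : EuclideanSpace ℝ (Fin n)) : ℝ :=
  sInf {t : ℝ | ∃ r : ℝ, 0 < r ∧ t = 1 / r ∧
    ∃ f : ℂ → EuclideanSpace ℝ (Fin n),
      ConformalHarmonicOn n f (ball (0:ℂ) 1) ∧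
      Set.MapsTo f (ball (0:ℂ) 1) Ω ∧ f 0 = x ∧ fderiv ℝ f 0 1 = r • u}

/-- The minimal pseudodistance `ρ_Ω`, obtained by integrating `g_Ω` over paths in `Ω`
joining the two points. -/
noncomputable def minDist (n : ℕ) (Ω : Set (EuclideanSpace ℝ (Fin n)))
    (x y : EuclideanSpace ℝ (Fin n)) : ℝ :=
  sInf {L : ℝ | ∃ γ : ℝ → EuclideanSpace ℝ (Fin n),
    ContDiffOn ℝ 1 γ (Set.Icc 0 1) ∧ (∀ t ∈ Set.Icc (0:ℝ) 1, γ t ∈ Ω) ∧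
    γ 0 = x ∧ γ 1 = y ∧
    L = ∫ t in (0:ℝ)..1, minMetric n Ω (γ t) (derivWithin γ (Set.Icc 0 1) t)}

/-- A domain is hyperbolic if its minimal pseudodistance separates points. -/
def Hyperbolic (n : ℕ) (Ω : Set (EuclideanSpace ℝ (Fin n))) : Prop :=
  ∀ x ∈ Ω, ∀ y ∈ Ω, x ≠ y → 0 < minDist n Ω x y

/-!
Near the puncture the circles `‖z‖ = r` have hyperbolic length `π / log (1 / r)`, which tends to
zero, and conformal harmonic maps do not increase the minimal distance. Hence, if `f` comes close to
`p` at a point of a small circle, the minimal distance from `p` to every point of the image of that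
circle is small. Around `p`, however, a small Euclidean sphere stays at a positive minimal distance,
because the minimal distance separates `p` from each of its points and the sphere is compact. The
image of the circle, being connected, cannot cross that sphere, so it lies near `p`. The maximum
principle on annuli between such circles shows that every coordinate of `f`, and so `f`, tends to
`p` at the puncture. A continuous function that is harmonic off a point is harmonic: by the
Borel–Carathéodory theorem `u_x - i u_y` is `o(1 / |z|)`, so its singularity is removable, and a
primitive of it has real part `u` up to a constant. Conformality at the puncture follows by
continuity of the derivative.
-/

section NormedSpace

open Set

theorem isPreconnected_ball_diff_singleton {E : Type*} [NormedAddCommGroup E] [NormedSpace ℝ E]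
    (h : 1 < Module.rank ℝ E) (c : E) (r : ℝ) : IsPreconnected (ball c r \ {c}) := by
  have hpolar : ball c r \ {c} =
      (fun q : ℝ × E => c + q.1 • q.2) '' (Ioo 0 r ×ˢ sphere (0 : E) 1) := by
    ext z
    constructor
    · rintro ⟨hz, hzc⟩
      have hpos : 0 < ‖z - c‖ := norm_sub_pos_iff.2 hzc
      refine ⟨(‖z - c‖, ‖z - c‖⁻¹ • (z - c)), ⟨⟨hpos, mem_ball_iff_norm.1 hz⟩, ?_⟩, ?_⟩
      · simp [norm_smul, hpos.ne']
      · simp [smul_smul, hpos.ne']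
    · rintro ⟨⟨t, v⟩, ⟨⟨ht, htr⟩, hv⟩, rfl⟩
      have hv : ‖v‖ = 1 := mem_sphere_zero_iff_norm.1 hv
      have hv₀ : v ≠ 0 := norm_ne_zero_iff.1 (hv ▸ one_ne_zero)
      simp [norm_smul, hv, abs_of_pos ht, htr, ht.ne', hv₀]
  rw [hpolar]
  exact (isPreconnected_Ioo.prod (isPreconnected_sphere h 0 1)).image _ (by fun_prop)

end NormedSpace

/-! ### Harmonic functions in the plane -/

section Harmonic

open Set Complex InnerProductSpace Topology Asymptotics

variable {u : ℂ → ℝ} {c z : ℂ}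

theorem exists_analyticAt_re_eventuallyEq (hu : HarmonicAt u z) :
    ∃ F : ℂ → ℂ, AnalyticAt ℂ F z ∧ (fun w => (F w).re) =ᶠ[𝓝 z] u := by
  obtain ⟨r, hr, hur⟩ := eventually_nhds_iff_ball.1 hu.eventually
  obtain ⟨F, hF, hFu⟩ := HarmonicOnNhd.exists_analyticOnNhd_ball_re_eq hur
  exact ⟨F, hF z (mem_ball_self hr), hFu.eventuallyEq_of_mem (ball_mem_nhds z hr)⟩

theorem harmonicAt_comp_analyticAt {φ : ℂ → ℂ} (hu : HarmonicAt u (φ z)) (hφ : AnalyticAt ℂ φ z) :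
    HarmonicAt (u ∘ φ) z := by
  obtain ⟨F, hF, hFu⟩ := exists_analyticAt_re_eventuallyEq hu
  exact (harmonicAt_congr_nhds (hFu.comp_tendsto hφ.continuousAt)).1 (hF.comp hφ).harmonicAt_re

theorem eventually_eq_of_isLocalMax_of_harmonicAt (hu : HarmonicAt u z) (hmax : IsLocalMax u z) :
    ∀ᶠ w in 𝓝 z, u w = u z := by
  obtain ⟨F, hF, hFu⟩ := exists_analyticAt_re_eventuallyEq hu
  have norm_exp_F : (fun w => ‖cexp (F w)‖) =ᶠ[𝓝 z] fun w => Real.exp (u w) := by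
    filter_upwards [hFu] with w hw
    rw [norm_exp, hw]
  have hconst : ∀ᶠ w in 𝓝 z, cexp (F w) = cexp (F z) := by
    refine eventually_eq_of_isLocalMax_norm ?_ ?_
    · exact hF.eventually_analyticAt.mono fun w hw => hw.differentiableAt.cexp
    · exact IsLocalMax.congr (hmax.comp_mono Real.exp_monotone) norm_exp_F.symm
  filter_upwards [hconst, norm_exp_F] with w hw hwu
  rwa [hw, norm_exp_F.eq_of_nhds, Real.exp_eq_exp, eq_comm] at hwu

theorem le_of_forall_mem_frontier_le_of_harmonicContOnCl {U : Set ℂ} {M : ℝ}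
    (hU : Bornology.IsBounded U) (hu : HarmonicContOnCl u U) (hM : ∀ w ∈ frontier U, u w ≤ M)
    (hz : z ∈ closure U) : u z ≤ M := by
  obtain ⟨m, hm, hmax⟩ := hU.isCompact_closure.exists_isMaxOn ⟨z, hz⟩ hu.continuousOn
  refine (hmax hz).trans ?_
  by_contra! hMm
  set S : Set ℂ := closure U ∩ u ⁻¹' {u m}
  have hS_closed : IsClosed S :=
    hu.continuousOn.preimage_isClosed_of_isClosed isClosed_closure isClosed_singleton
  have hS_open : IsOpen S := isOpen_iff_mem_nhds.2 fun w ⟨hwU, (hwm : u w = u m)⟩ => by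
    have hw : w ∈ interior U := by
      by_contra hw
      exact hMm.not_ge (hwm ▸ hM w ⟨hwU, hw⟩)
    have hUw : U ∈ 𝓝 w := mem_interior_iff_mem_nhds.1 hw
    have hlocal : IsLocalMax u w := by
      filter_upwards [hUw] with v hv
      exact hwm ▸ hmax (subset_closure hv)
    filter_upwards [hUw, eventually_eq_of_isLocalMax_of_harmonicAt
      (hu.harmonicOnNhd w (interior_subset hw)) hlocal] with v hv hvw
    exact ⟨subset_closure hv, hvw.trans hwm⟩
  have hS_univ : S = univ := IsClopen.eq_univ ⟨hS_closed, hS_open⟩ ⟨m, hm, rfl⟩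
  exact NormedSpace.unbounded_univ ℝ ℂ (hS_univ ▸ hU.closure.subset inter_subset_left)

theorem abs_sub_le_of_forall_mem_frontier_of_harmonicContOnCl {U : Set ℂ} {a ε : ℝ}
    (hU : Bornology.IsBounded U) (hu : HarmonicContOnCl u U)
    (hε : ∀ w ∈ frontier U, |u w - a| ≤ ε) (hz : z ∈ closure U) : |u z - a| ≤ ε := by
  refine abs_sub_le_iff.2 ⟨?_, ?_⟩
  · exact le_of_forall_mem_frontier_le_of_harmonicContOnCl hU (hu.fun_sub_const a)
      (fun w hw => (abs_sub_le_iff.1 (hε w hw)).1) hz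
  · exact le_of_forall_mem_frontier_le_of_harmonicContOnCl hU (hu.fun_const_sub a)
      (fun w hw => (abs_sub_le_iff.1 (hε w hw)).2) hz

theorem abs_sub_le_of_mem_annulus {r₁ r₂ a ε : ℝ}
    (hu : HarmonicOnNhd u (closedBall c r₂ \ ball c r₁))
    (h₁ : ∀ w ∈ sphere c r₁, |u w - a| ≤ ε) (h₂ : ∀ w ∈ sphere c r₂, |u w - a| ≤ ε)
    (hz₁ : r₁ ≤ dist z c) (hz₂ : dist z c ≤ r₂) : |u z - a| ≤ ε := by
  rcases hz₁.eq_or_lt with hz₁ | hz₁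
  · exact h₁ z hz₁.symm
  rcases hz₂.eq_or_lt with hz₂ | hz₂
  · exact h₂ z hz₂
  set U : Set ℂ := ball c r₂ \ closedBall c r₁
  have hU_closure : closure U ⊆ closedBall c r₂ \ ball c r₁ := by
    refine closure_minimal (sdiff_subset_sdiff ball_subset_closedBall ball_subset_closedBall) ?_
    exact isClosed_closedBall.sdiff isOpen_ball
  refine abs_sub_le_of_forall_mem_frontier_of_harmonicContOnCl
    (isBounded_ball.subset sdiff_subset) (hu.mono hU_closure).harmonicContOnCl (fun w hw => ?_)
    (subset_closure (⟨hz₂, hz₁.not_ge⟩ : z ∈ U))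
  have hU_open : IsOpen U := isOpen_ball.sdiff isClosed_closedBall
  obtain ⟨hwr₂, hwr₁⟩ := hU_closure (frontier_subset_closure hw)
  have hwU : w ∉ U := (hU_open.frontier_eq ▸ hw).2
  have hr₁w : r₁ ≤ dist w c := not_lt.1 hwr₁
  rcases hr₁w.eq_or_lt with hwc | hwc
  · exact h₁ w hwc.symm
  · exact h₂ w ((mem_closedBall.1 hwr₂).eq_of_not_lt fun hlt => hwU ⟨hlt, hwc.not_ge⟩)

theorem tendsto_of_frequently_forall_mem_circle_abs_sub_le {a : ℝ}
    (hu : ∀ᶠ z in 𝓝[≠] c, HarmonicAt u z)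
    (ha : ∀ ε > 0, ∃ᶠ ζ in 𝓝[≠] c, ∀ w ∈ sphere c (dist ζ c), |u w - a| ≤ ε) :
    Tendsto u (𝓝[≠] c) (𝓝 a) := by
  refine (nhds_basis_closedBall.tendsto_right_iff).2 fun ε hε => ?_
  obtain ⟨r, hr, hur⟩ := eventually_nhds_iff_ball.1 (eventually_nhdsWithin_iff.1 hu)
  obtain ⟨ζ, hζ_circle, hζr, hζc⟩ := ((ha ε hε).and_eventually
    ((eventually_nhdsWithin_of_eventually_nhds (ball_mem_nhds c hr)).and
      self_mem_nhdsWithin)).exists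
  filter_upwards [self_mem_nhdsWithin, mem_nhdsWithin_of_mem_nhds
    (closedBall_mem_nhds c (dist_pos.2 hζc))] with z hzc hzζ
  obtain ⟨ξ, hξ_circle, hξz, hξc⟩ := ((ha ε hε).and_eventually
    ((eventually_nhdsWithin_of_eventually_nhds (closedBall_mem_nhds c (dist_pos.2 hzc))).and
      self_mem_nhdsWithin)).exists
  exact abs_sub_le_of_mem_annulus
    (fun w hw => hur w (lt_of_le_of_lt hw.1 hζr)
      fun hwc => hw.2 (by simpa [mem_singleton_iff.1 hwc] using dist_pos.2 hξc))
    hξ_circle hζ_circle hξz hzζ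

/-- The derivative `u_x - i u_y = 2 ∂u/∂z` of a real function on the plane. It is holomorphic where
`u` is harmonic, and it is the derivative of any holomorphic function with real part `u`. -/
noncomputable def wirtingerDeriv (u : ℂ → ℝ) (z : ℂ) : ℂ := fderiv ℝ u z 1 - I * fderiv ℝ u z I

theorem differentiableAt_wirtingerDeriv (hu : HarmonicAt u z) :
    DifferentiableAt ℂ (wirtingerDeriv u) z :=
  HarmonicAt.differentiableAt_complex_partial hu

theorem fderiv_apply_eq_re_wirtingerDeriv_mul (u : ℂ → ℝ) (z v : ℂ) :
    fderiv ℝ u z v = (wirtingerDeriv u z * v).re := by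
  have hv : v = v.re • (1 : ℂ) + v.im • I := by simp
  calc fderiv ℝ u z v = v.re * fderiv ℝ u z 1 + v.im * fderiv ℝ u z I := by
        conv_lhs => rw [hv, map_add, map_smul, map_smul, smul_eq_mul, smul_eq_mul]
    _ = (wirtingerDeriv u z * v).re := by simp [wirtingerDeriv]; ring

theorem hasFDerivAt_re_of_hasDerivAt {F : ℂ → ℂ} {F' : ℂ} (hF : HasDerivAt F F' z) :
    HasFDerivAt (fun w => (F w).re)
      (reCLM ∘L (ContinuousLinearMap.toSpanSingleton ℂ F').restrictScalars ℝ) z :=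
  reCLM.hasFDerivAt.comp z (hF.hasFDerivAt.restrictScalars ℝ)

theorem wirtingerDeriv_re {F : ℂ → ℂ} {F' : ℂ} (hF : HasDerivAt F F' z) :
    wirtingerDeriv (fun w => (F w).re) z = F' := by
  rw [wirtingerDeriv, (hasFDerivAt_re_of_hasDerivAt hF).fderiv]
  apply Complex.ext <;> simp

theorem norm_wirtingerDeriv_le {M R : ℝ} (hM : 0 < M) (hR : 0 < R) (hu : HarmonicOnNhd u (ball z R))
    (hMu : ∀ w ∈ ball z R, u w - u z ≤ M) : ‖wirtingerDeriv u z‖ ≤ 4 * M / R := by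
  obtain ⟨F, hF, hFu⟩ := HarmonicOnNhd.exists_analyticOnNhd_ball_re_eq hu
  have hz : z ∈ ball z R := mem_ball_self hR
  have hFz : HasDerivAt F (wirtingerDeriv u z) z := by
    have hFz' := (hF z hz).differentiableAt.hasDerivAt
    have hfderiv := (hFu.eventuallyEq_of_mem (ball_mem_nhds z hR)).fderiv_eq (𝕜 := ℝ)
    rwa [← wirtingerDeriv_re hFz', wirtingerDeriv, hfderiv] at hFz'
  set G : ℂ → ℂ := fun w => F (z + w) - F z
  have hG : HasDerivAt G (wirtingerDeriv u z) 0 :=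
    (HasDerivAt.comp_const_add z 0 (by rwa [add_zero])).sub_const (F z)
  have hmaps : MapsTo (z + ·) (ball 0 R) (ball z R) := fun w hw => by simpa using hw
  have hG_diff : DifferentiableOn ℂ G (ball 0 R) :=
    (hF.differentiableOn.comp (by fun_prop) hmaps).sub_const (F z)
  have hG_re : MapsTo G (ball 0 R) {w | w.re ≤ M} := fun w hw => by
    simpa [G, ← hFu hz, ← hFu (hmaps hw)] using hMu _ (hmaps hw)
  have hG_sphere : ∀ w ∈ sphere (0 : ℂ) (R / 2), ‖G w‖ ≤ 2 * M := fun w hw => by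
    have hw' : ‖w‖ = R / 2 := mem_sphere_zero_iff_norm.1 hw
    refine (borelCaratheodory_zero hM hG_diff hG_re hR ?_ (by simp [G])).trans_eq ?_
    · rw [mem_ball_zero_iff]; linarith
    · rw [hw']; field_simp; ring
  calc ‖wirtingerDeriv u z‖ = ‖deriv G 0‖ := by rw [hG.deriv]
    _ ≤ 2 * M / (R / 2) := norm_deriv_le_of_forall_mem_sphere_norm_le (half_pos hR)
        (hG_diff.diffContOnCl_ball (closedBall_subset_ball (half_lt_self hR))) hG_sphere
    _ = 4 * M / R := by field_simp; ring

theorem wirtingerDeriv_isLittleO_inv (hu : ∀ᶠ z in 𝓝[≠] c, HarmonicAt u z)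
    (hc : ContinuousAt u c) : wirtingerDeriv u =o[𝓝[≠] c] fun z => (z - c)⁻¹ := by
  refine isLittleO_iff.2 fun ε hε => ?_
  obtain ⟨r, hr, hur⟩ := eventually_nhds_iff_ball.1 ((eventually_nhdsWithin_iff.1 hu).and
    (hc.eventually (ball_mem_nhds (u c) (by positivity : 0 < ε / 8))))
  filter_upwards [self_mem_nhdsWithin, mem_nhdsWithin_of_mem_nhds
    (ball_mem_nhds c (half_pos hr))] with z hzc hz
  have hR : 0 < dist z c := dist_pos.2 hzc
  have hsub : ball z (dist z c) ⊆ ball c r := ball_subset_ball' <| by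
    have := mem_ball.1 hz
    linarith
  have hosc : ∀ w ∈ ball z (dist z c), u w - u z ≤ ε / 4 := fun w hw => by
    have hwz := (hur w (hsub hw)).2
    have hzz := (hur z (hsub (mem_ball_self hR))).2
    rw [Real.dist_eq, abs_lt] at hwz hzz
    linarith
  calc ‖wirtingerDeriv u z‖ ≤ 4 * (ε / 4) / dist z c :=
        norm_wirtingerDeriv_le (by positivity) hR (fun w hw => (hur w (hsub hw)).1
          fun hwc => by simp [mem_singleton_iff.1 hwc, dist_comm] at hw) hosc
    _ = ε * ‖(z - c)⁻¹‖ := by rw [norm_inv, ← dist_eq_norm]; field_simp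

theorem exists_hasDerivAt_wirtingerDeriv {r : ℝ} (hr : 0 < r)
    (hu : HarmonicOnNhd u (ball c r \ {c})) (hc : ContinuousAt u c) :
    ∃ G : ℂ → ℂ, DifferentiableOn ℂ G (ball c r) ∧
      ∀ z ∈ ball c r \ {c}, HasDerivAt G (wirtingerDeriv u z) z := by
  have hball : ball c r ∈ 𝓝 c := ball_mem_nhds c hr
  have hconst : (fun _ => wirtingerDeriv u c) =o[𝓝[≠] c] fun z => (z - c)⁻¹ :=
    isLittleO_const_left.2 <| .inr <| tendsto_norm_cobounded_atTop.comp <|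
      tendsto_inv₀_nhdsNE_zero.comp <| by
        simpa using ((hasDerivAt_id c).sub_const c).tendsto_nhdsNE one_ne_zero
  have hdiff := differentiableOn_update_limUnder_of_isLittleO hball
    (fun z hz => (differentiableAt_wirtingerDeriv (hu z hz)).differentiableWithinAt)
    ((wirtingerDeriv_isLittleO_inv
      (mem_of_superset (sdiff_mem_nhdsWithin_compl hball {c}) hu) hc).sub hconst)
  obtain ⟨G, hG⟩ := hdiff.isExactOn_ball
  refine ⟨G, fun z hz => (hG z hz).differentiableAt.differentiableWithinAt, fun z hz => ?_⟩
  simpa only [Function.update_of_ne hz.2] using hG z hz.1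

theorem harmonicAt_of_eventually_nhdsNE_of_continuousAt (hu : ∀ᶠ z in 𝓝[≠] c, HarmonicAt u z)
    (hc : ContinuousAt u c) : HarmonicAt u c := by
  obtain ⟨r, hr, hur⟩ := eventually_nhds_iff_ball.1 (eventually_nhdsWithin_iff.1 hu)
  have hball : ball c r ∈ 𝓝 c := ball_mem_nhds c hr
  have hur' : HarmonicOnNhd u (ball c r \ {c}) := fun z hz => hur z hz.1 hz.2
  obtain ⟨G, hG, hGu⟩ := exists_hasDerivAt_wirtingerDeriv hr hur' hc
  have hfderiv : EqOn (fderiv ℝ u) (fderiv ℝ fun z => (G z).re) (ball c r \ {c}) := fun z hz => by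
    ext v
    rw [fderiv_apply_eq_re_wirtingerDeriv_mul, fderiv_apply_eq_re_wirtingerDeriv_mul,
      wirtingerDeriv_re (hGu z hz)]
  obtain ⟨a, ha⟩ := (isOpen_ball.sdiff isClosed_singleton).exists_eq_add_of_fderiv_eq
    (isPreconnected_ball_diff_singleton (by simp [rank_real_complex]) c r)
    (hur'.contDiffOn.differentiableOn two_ne_zero)
    (fun z hz => (hasFDerivAt_re_of_hasDerivAt (hGu z hz)).differentiableAt.differentiableWithinAt)
    hfderiv
  have hGc : AnalyticAt ℂ G c := hG.analyticAt hball
  have hGa : HarmonicAt (fun z => (G z).re + a) c := hGc.harmonicAt_re.add (harmonicAt_const a)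
  refine (harmonicAt_congr_nhds ?_).2 hGa
  exact (hc.eventuallyEq_nhds_iff_eventuallyEq_nhdsNE hGa.1.continuousAt).1
    (ha.eventuallyEq_of_mem (sdiff_mem_nhdsWithin_compl hball {c}))

end Harmonic

/-! ### Weakly conformal linear maps -/

section WeaklyConformal

open Complex

variable {E : Type*} [NormedAddCommGroup E] [InnerProductSpace ℝ E] {A : ℂ →L[ℝ] E}

/-- A real-linear map `ℂ → E` is weakly conformal if it maps `1, I` to orthogonal vectors of equal
length. The zero map is allowed, as it is in the notion of a conformal harmonic map. -/
def IsWeaklyConformal (A : ℂ →L[ℝ] E) : Prop := ‖A 1‖ = ‖A I‖ ∧ ⟪A 1, A I⟫ = 0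

theorem isWeaklyConformal_iff_norm_apply : IsWeaklyConformal A ↔ ∀ v, ‖A v‖ = ‖A 1‖ * ‖v‖ := by
  constructor
  · rintro ⟨hnorm, hinner⟩ v
    have hv : A v = v.re • A 1 + v.im • A I := by
      rw [← map_smul, ← map_smul, ← map_add]
      simp
    have hortho : ⟪v.re • A 1, v.im • A I⟫ = 0 := by
      rw [real_inner_smul_left, real_inner_smul_right, hinner, mul_zero, mul_zero]
    rw [← sq_eq_sq₀ (norm_nonneg _) (by positivity), hv, norm_add_sq_real, hortho, norm_smul,
      norm_smul, ← hnorm, mul_pow, mul_pow, mul_pow, Complex.sq_norm, normSq_apply,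
      Real.norm_eq_abs, Real.norm_eq_abs, sq_abs, sq_abs]
    ring
  · intro h
    have hI : ‖A I‖ = ‖A 1‖ := by simpa using h I
    have hadd : ‖A 1 + A I‖ ^ 2 = 2 * ‖A 1‖ ^ 2 := by
      have hnorm : ‖(1 + I : ℂ)‖ ^ 2 = 2 := by
        rw [Complex.sq_norm, normSq_apply]
        norm_num
      rw [← map_add, h, mul_pow, hnorm, mul_comm]
    rw [norm_add_sq_real, hI] at hadd
    exact ⟨hI.symm, by linarith⟩

theorem IsWeaklyConformal.comp_restrictScalars (hA : IsWeaklyConformal A) (B : ℂ →L[ℂ] ℂ) :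
    IsWeaklyConformal (A ∘L B.restrictScalars ℝ) := by
  rw [isWeaklyConformal_iff_norm_apply] at hA ⊢
  intro v
  have hB : B v = v * B 1 := by rw [← smul_eq_mul, ← map_smul, smul_eq_mul, mul_one]
  simp only [ContinuousLinearMap.comp_apply, ContinuousLinearMap.coe_restrictScalars']
  rw [hA (B v), hA (B 1), hB, norm_mul]
  ring

theorem isClosed_setOf_isWeaklyConformal : IsClosed {A : ℂ →L[ℝ] E | IsWeaklyConformal A} := by
  have happly (v : ℂ) : Continuous fun A : ℂ →L[ℝ] E => A v := continuous_eval_const v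
  exact (isClosed_eq (happly 1).norm (happly I).norm).inter
    (isClosed_eq ((happly 1).inner (happly I)) continuous_const)

theorem exists_norm_eq_inner_eq_zero (hE : 1 < Module.rank ℝ E) (v : E) :
    ∃ w : E, ‖v‖ = ‖w‖ ∧ ⟪v, w⟫ = 0 := by
  have hne : (ℝ ∙ v)ᗮ ≠ ⊥ := fun h => by
    rw [Submodule.orthogonal_eq_bot_iff] at h
    have hspan : Module.rank ℝ (ℝ ∙ v) ≤ 1 :=
      (rank_submodule_le_one_iff' _).2 ⟨v, le_rfl⟩
    rw [h, rank_top] at hspan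
    exact hspan.not_gt hE
  obtain ⟨w, hw, hw₀⟩ := Submodule.exists_mem_ne_zero_of_ne_bot hne
  refine ⟨(‖v‖ / ‖w‖) • w, ?_, ?_⟩
  · rw [norm_smul, norm_div, norm_norm, norm_norm, div_mul_cancel₀ _ (norm_ne_zero_iff.2 hw₀)]
  · rw [real_inner_smul_right, Submodule.mem_orthogonal_singleton_iff_inner_right.1 hw, mul_zero]

theorem exists_isWeaklyConformal_apply_one_eq (hE : 1 < Module.rank ℝ E) (u : E) :
    ∃ A : ℂ →L[ℝ] E, IsWeaklyConformal A ∧ A 1 = u := by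
  obtain ⟨w, hnorm, hinner⟩ := exists_norm_eq_inner_eq_zero hE u
  refine ⟨reCLM.smulRight u + imCLM.smulRight w, ⟨?_, ?_⟩, ?_⟩ <;> simp [hnorm, hinner]

end WeaklyConformal

/-! ### Conformal harmonic maps -/

section ConformalHarmonic

open Set Complex InnerProductSpace Topology Laplacian

theorem harmonicAt_euclideanSpace {ι E : Type*} [Fintype ι] [NormedAddCommGroup E]
    [InnerProductSpace ℝ E] [FiniteDimensional ℝ E] {f : E → EuclideanSpace ℝ ι} {x : E} :
    HarmonicAt f x ↔ ∀ i, HarmonicAt (fun w => f w i) x := by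
  refine ⟨fun hf i => hf.comp_CLM (EuclideanSpace.proj i), fun hf => ?_⟩
  have hf_smooth : ContDiffAt ℝ 2 f x := (contDiffAt_piLp (p := 2)).2 fun i => (hf i).1
  refine ⟨hf_smooth, ?_⟩
  filter_upwards [hf_smooth.eventually (by simp), eventually_all.2 fun i => (hf i).2]
    with w hw hΔ
  ext i
  have hproj := hw.laplacian_CLM_comp_left (l := (EuclideanSpace.proj i : _ →L[ℝ] ℝ))
  exact hproj.symm.trans (hΔ i)

variable {n : ℕ} {f g : ℂ → EuclideanSpace ℝ (Fin n)} {s t : Set ℂ} {c z : ℂ}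

theorem lapV_eq_laplacian (hf : ContDiffAt ℝ 2 f z) : lapV n f z = Δ f z := by
  have hf' : DifferentiableAt ℝ (fderiv ℝ f) z :=
    (hf.fderiv_right (m := 1) (by norm_num)).differentiableAt one_ne_zero
  rw [laplacian_eq_iteratedFDeriv_complexPlane, lapV]
  simp [iteratedFDeriv_two_apply, fderiv_clm_apply hf' (differentiableAt_const _)]

theorem conformalHarmonicOn_iff (hs : IsOpen s) : ConformalHarmonicOn n f s ↔
    HarmonicOnNhd f s ∧ ∀ z ∈ s, IsWeaklyConformal (fderiv ℝ f z) := by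
  constructor
  · rintro ⟨hf_smooth, hlap, hconf⟩
    have hf_smooth' : ∀ z ∈ s, ContDiffAt ℝ 2 f z := fun z hz =>
      hf_smooth.contDiffAt (hs.mem_nhds hz)
    refine ⟨fun z hz => ⟨hf_smooth' z hz, ?_⟩, hconf⟩
    filter_upwards [hs.mem_nhds hz] with w hw
    rw [← lapV_eq_laplacian (hf_smooth' w hw), hlap w hw, Pi.zero_apply]
  · rintro ⟨hharm, hconf⟩
    refine ⟨hharm.contDiffOn, fun z hz => ?_, hconf⟩
    rw [lapV_eq_laplacian (hharm z hz).1, (hharm z hz).2.eq_of_nhds, Pi.zero_apply]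

namespace ConformalHarmonicOn

theorem differentiableAt (hf : ConformalHarmonicOn n f s) (hs : IsOpen s) (hz : z ∈ s) :
    DifferentiableAt ℝ f z :=
  (hf.1.contDiffAt (hs.mem_nhds hz)).differentiableAt two_ne_zero

theorem comp_differentiableOn {φ : ℂ → ℂ} (hf : ConformalHarmonicOn n f s) (hs : IsOpen s)
    (hφ : DifferentiableOn ℂ φ t) (ht : IsOpen t) (hmaps : MapsTo φ t s) :
    ConformalHarmonicOn n (f ∘ φ) t := by
  obtain ⟨hharm, hconf⟩ := (conformalHarmonicOn_iff hs).1 hf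
  refine (conformalHarmonicOn_iff ht).2 ⟨fun z hz => ?_, fun z hz => ?_⟩
  · have hφz : AnalyticAt ℂ φ z := hφ.analyticAt (ht.mem_nhds hz)
    exact harmonicAt_euclideanSpace.2 fun i =>
      harmonicAt_comp_analyticAt (harmonicAt_euclideanSpace.1 (hharm (φ z) (hmaps hz)) i) hφz
  · have hφz : DifferentiableAt ℂ φ z := hφ.differentiableAt (ht.mem_nhds hz)
    rw [fderiv_comp z (hf.differentiableAt hs (hmaps hz)) (hφz.restrictScalars (𝕜 := ℝ)),
      hφz.fderiv_restrictScalars (𝕜 := ℝ)]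
    exact (hconf (φ z) (hmaps hz)).comp_restrictScalars _

theorem congr (hf : ConformalHarmonicOn n f s) (hs : IsOpen s) (hfg : EqOn f g s) :
    ConformalHarmonicOn n g s := by
  obtain ⟨hharm, hconf⟩ := (conformalHarmonicOn_iff hs).1 hf
  have hfg' : ∀ z ∈ s, f =ᶠ[𝓝 z] g := fun z hz => hfg.eventuallyEq_of_mem (hs.mem_nhds hz)
  refine (conformalHarmonicOn_iff hs).2 ⟨fun z hz => ?_, fun z hz => ?_⟩
  · exact (harmonicAt_congr_nhds (hfg' z hz)).1 (hharm z hz)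
  · exact (hfg' z hz).fderiv_eq (𝕜 := ℝ) ▸ hconf z hz

theorem of_diff_singleton (hs : IsOpen s) (hf : ConformalHarmonicOn n f (s \ {c}))
    (hc : ContinuousAt f c) : ConformalHarmonicOn n f s := by
  obtain ⟨hharm, hconf⟩ := (conformalHarmonicOn_iff (hs.sdiff isClosed_singleton)).1 hf
  by_cases hcs : c ∈ s
  swap
  · rwa [sdiff_singleton_eq_self hcs] at hf
  have hpunctured : s \ {c} ∈ 𝓝[≠] c := sdiff_mem_nhdsWithin_compl (hs.mem_nhds hcs) {c}
  have hharm_c : HarmonicAt f c := harmonicAt_euclideanSpace.2 fun i =>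
    harmonicAt_of_eventually_nhdsNE_of_continuousAt
      (mem_of_superset hpunctured fun z hz => harmonicAt_euclideanSpace.1 (hharm z hz) i)
      ((EuclideanSpace.proj i).continuous.continuousAt.comp hc)
  have hconf_c : IsWeaklyConformal (fderiv ℝ f c) := by
    have hfderiv : ContinuousAt (fderiv ℝ f) c :=
      (hharm_c.1.fderiv_right (m := 0) (by norm_num)).continuousAt
    exact isClosed_setOf_isWeaklyConformal.mem_of_tendsto
      (hfderiv.tendsto.mono_left nhdsWithin_le_nhds) (mem_of_superset hpunctured hconf)
  refine (conformalHarmonicOn_iff hs).2 ⟨fun z hz => ?_, fun z hz => ?_⟩ <;>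
    rcases eq_or_ne z c with rfl | hzc
  · exact hharm_c
  · exact hharm z ⟨hz, hzc⟩
  · exact hconf_c
  · exact hconf z ⟨hz, hzc⟩

end ConformalHarmonicOn

theorem conformalHarmonicOn_const_add {A : ℂ →L[ℝ] EuclideanSpace ℝ (Fin n)}
    (hA : IsWeaklyConformal A) (x : EuclideanSpace ℝ (Fin n)) :
    ConformalHarmonicOn n (fun z => x + A z) univ := by
  have hfderiv : fderiv ℝ (fun z => x + A z) = fun _ => A := by
    ext1 z
    rw [fderiv_const_add, A.fderiv]
  refine ⟨(contDiff_const.add A.contDiff).contDiffOn, fun z _ => ?_, fun z _ => ?_⟩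
  · simp [lapV]
  · exact hfderiv ▸ hA

end ConformalHarmonic

/-! ### Minimal discs and the minimal distance -/

section MinimalDistance

open Set Complex Topology

variable {n : ℕ} {Ω : Set (EuclideanSpace ℝ (Fin n))} {p x y z u : EuclideanSpace ℝ (Fin n)}
  {T T₁ T₂ ε : ℝ}

/-- The assertion that `u` is the `x`-derivative at the centre of some conformal harmonic disc in
`Ω` centred at `x`. Thus `minMetric n Ω x u` is the infimum of the numbers `1 / r` such that `r • u`
is such a vector, and those `u` are admissible velocities for paths of speed at most one. -/
def HasMinimalDisc (n : ℕ) (Ω : Set (EuclideanSpace ℝ (Fin n)))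
    (x u : EuclideanSpace ℝ (Fin n)) : Prop :=
  ∃ f : ℂ → EuclideanSpace ℝ (Fin n), ConformalHarmonicOn n f (ball 0 1) ∧
    MapsTo f (ball 0 1) Ω ∧ f 0 = x ∧ fderiv ℝ f 0 1 = u

theorem HasMinimalDisc.mem (h : HasMinimalDisc n Ω x u) : x ∈ Ω := by
  obtain ⟨f, -, hfΩ, rfl, -⟩ := h
  exact hfΩ (mem_ball_self one_pos)

theorem minMetric_nonneg (n : ℕ) (Ω : Set (EuclideanSpace ℝ (Fin n)))
    (x u : EuclideanSpace ℝ (Fin n)) : 0 ≤ minMetric n Ω x u := by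
  refine Real.sInf_nonneg ?_
  rintro _ ⟨r, hr, rfl, -⟩
  positivity

theorem HasMinimalDisc.minMetric_le {r : ℝ} (h : HasMinimalDisc n Ω x (r • u)) (hr : 0 < r) :
    minMetric n Ω x u ≤ 1 / r := by
  refine csInf_le ⟨0, ?_⟩ ⟨r, hr, rfl, h⟩
  rintro _ ⟨s, hs, rfl, -⟩
  positivity

/-- The points `x` and `y` are joined in time `T` by a `C¹` path whose velocities are all attained
by minimal discs, so that its length for the minimal metric is at most `T`. The path is defined on
the whole line and stationary outside `[0, T]`, which makes concatenations `C¹`. -/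
def SubunitJoined (n : ℕ) (Ω : Set (EuclideanSpace ℝ (Fin n))) (T : ℝ)
    (x y : EuclideanSpace ℝ (Fin n)) : Prop :=
  0 < T ∧ ∃ γ : ℝ → EuclideanSpace ℝ (Fin n), ContDiff ℝ 1 γ ∧ (∀ t ≤ 0, γ t = x) ∧
    (∀ t ≥ T, γ t = y) ∧ ∀ t, HasMinimalDisc n Ω (γ t) (deriv γ t)

theorem SubunitJoined.mono (h : SubunitJoined n Ω T₁ x y) (hT : T₁ ≤ T₂) :
    SubunitJoined n Ω T₂ x y := by
  obtain ⟨hT₁, γ, hγ, hγx, hγy, hdisc⟩ := h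
  exact ⟨hT₁.trans_le hT, γ, hγ, hγx, fun t ht => hγy t (hT.trans ht), hdisc⟩

theorem SubunitJoined.minDist_le (h : SubunitJoined n Ω T x y) : minDist n Ω x y ≤ T := by
  obtain ⟨hT, γ, hγ, hγx, hγy, hdisc⟩ := h
  have hη : ContDiff ℝ 1 fun t => γ (T * t) := by fun_prop
  have hspeed : ∀ t ∈ Icc (0 : ℝ) 1,
      minMetric n Ω (γ (T * t)) (derivWithin (fun t => γ (T * t)) (Icc 0 1) t) ≤ T := fun t ht => by
    rw [(hη.differentiable one_ne_zero t).derivWithin (uniqueDiffOn_Icc zero_lt_one t ht),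
      deriv_comp_mul_left]
    refine (HasMinimalDisc.minMetric_le (r := T⁻¹) ?_ (inv_pos.2 hT)).trans_eq (by simp)
    rw [inv_smul_smul₀ hT.ne']
    exact hdisc (T * t)
  have hlength := intervalIntegral.norm_integral_le_of_norm_le_const (a := (0 : ℝ)) (b := 1)
    (fun t ht => (Real.norm_of_nonneg (minMetric_nonneg n Ω _ _)).trans_le
      (hspeed t (Ioc_subset_Icc_self (uIoc_of_le (zero_le_one' ℝ) ▸ ht))))
  refine csInf_le_of_le ⟨0, ?_⟩ ⟨fun t => γ (T * t), hη.contDiffOn, fun t _ => (hdisc _).mem,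
    ?_, ?_, rfl⟩ ((le_abs_self _).trans (hlength.trans_eq (by simp)))
  · rintro _ ⟨η, -, -, -, -, rfl⟩
    exact intervalIntegral.integral_nonneg zero_le_one fun t _ => minMetric_nonneg n Ω _ _
  · exact hγx _ (mul_zero T).le
  · exact hγy _ (mul_one T).ge

theorem deriv_eq_zero_of_forall_mem_eq {E : Type*} [NormedAddCommGroup E] [NormedSpace ℝ E]
    {γ : ℝ → E} {s : Set ℝ} {t : ℝ} {a : E} (hs : UniqueDiffWithinAt ℝ s t) (ht : t ∈ s)
    (hγ : ∀ τ ∈ s, γ τ = a) : deriv γ t = 0 := by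
  by_cases hγt : DifferentiableAt ℝ γ t
  · rw [← hγt.derivWithin hs, derivWithin_congr hγ (hγ t ht), derivWithin_fun_const, Pi.zero_apply]
  · exact deriv_zero_of_not_differentiableAt hγt

theorem SubunitJoined.trans (hxy : SubunitJoined n Ω T₁ x y) (hyz : SubunitJoined n Ω T₂ y z) :
    SubunitJoined n Ω (T₁ + T₂) x z := by
  obtain ⟨hT₁, γ, hγ, hγx, hγy, hγ_disc⟩ := hxy
  obtain ⟨hT₂, η, hη, hηy, hηz, hη_disc⟩ := hyz
  have hderiv : ∀ t, deriv (fun t => γ t + η (t - T₁) - y) t = deriv γ t + deriv η (t - T₁) :=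
    fun t => (((hγ.differentiable one_ne_zero t).hasDerivAt.add
      ((hη.differentiable one_ne_zero (t - T₁)).hasDerivAt.comp_sub_const t T₁)).sub_const y).deriv
  refine ⟨add_pos hT₁ hT₂, fun t => γ t + η (t - T₁) - y, by fun_prop, fun t ht => ?_,
    fun t ht => ?_, fun t => ?_⟩
  · simp [hγx t ht, hηy (t - T₁) (by linarith)]
  · simp [hγy t (by linarith), hηz (t - T₁) (by linarith)]
  rw [hderiv]
  rcases le_total t T₁ with ht | ht
  · have ht' : t - T₁ ≤ 0 := sub_nonpos.2 ht
    simpa [hηy _ ht', deriv_eq_zero_of_forall_mem_eq (uniqueDiffOn_Iic 0 _ ht') ht' hηy]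
      using hγ_disc t
  · simpa [hγy t ht, deriv_eq_zero_of_forall_mem_eq (uniqueDiffOn_Ici T₁ t ht) ht hγy]
      using hη_disc (t - T₁)

/-- The maximal speed of `Real.smoothTransition`, which reparametrises curves on `[0, 1]` so that
they become stationary at their end points. -/
noncomputable def smoothTransitionSpeed : ℝ := ⨆ t, |deriv Real.smoothTransition t|

theorem abs_deriv_smoothTransition_le (t : ℝ) :
    |deriv Real.smoothTransition t| ≤ smoothTransitionSpeed := by
  have hcont : Continuous (deriv Real.smoothTransition) :=
    Real.smoothTransition.contDiff.continuous_deriv le_rfl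
  have hsupport : ∀ t ∉ Icc (0 : ℝ) 1, deriv Real.smoothTransition t = 0 := fun t ht => by
    rcases not_and_or.1 ht with ht | ht
    · exact deriv_eq_zero_of_forall_mem_eq (uniqueDiffOn_Iic 0 t (not_le.1 ht).le) (not_le.1 ht).le
        fun s hs => Real.smoothTransition.zero_of_nonpos hs
    · exact deriv_eq_zero_of_forall_mem_eq (uniqueDiffOn_Ici 1 t (not_le.1 ht).le) (not_le.1 ht).le
        fun s hs => Real.smoothTransition.one_of_one_le hs
  exact le_ciSup (f := fun t => |deriv Real.smoothTransition t|)
    (hcont.abs.bddAbove_range_of_hasCompactSupport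
      (.intro isCompact_Icc fun t ht => by rw [hsupport t ht, abs_zero])) t

theorem SubunitJoined.of_curve {c : ℝ → EuclideanSpace ℝ (Fin n)} (hc : ContDiff ℝ 1 c)
    (hT : 0 < T) (hdisc : ∀ s ∈ Icc (0 : ℝ) 1, ∀ a : ℝ, |a| * T ≤ smoothTransitionSpeed →
      HasMinimalDisc n Ω (c s) (a • deriv c s)) :
    SubunitJoined n Ω T (c 0) (c 1) := by
  have hσ : ContDiff ℝ 1 Real.smoothTransition := Real.smoothTransition.contDiff
  have hderiv : ∀ t, deriv (fun t => c (Real.smoothTransition (t / T))) t =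
      (deriv Real.smoothTransition (t / T) / T) • deriv c (Real.smoothTransition (t / T)) :=
    fun t => by
      have hσt : HasDerivAt (fun t => Real.smoothTransition (t / T))
          (deriv Real.smoothTransition (t / T) / T) t := by
        have hdiv : HasDerivAt (· / T) (1 / T) t := (hasDerivAt_id t).div_const T
        rw [← mul_one_div]
        exact (hσ.differentiable one_ne_zero (t / T)).hasDerivAt.comp t hdiv
      exact ((hc.differentiable one_ne_zero _).hasDerivAt.scomp t hσt).deriv
  refine ⟨hT, fun t => c (Real.smoothTransition (t / T)), by fun_prop, fun t ht => ?_,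
    fun t ht => ?_, fun t => ?_⟩
  · simp only [Real.smoothTransition.zero_of_nonpos (div_nonpos_of_nonpos_of_nonneg ht hT.le)]
  · simp only [Real.smoothTransition.one_of_one_le ((one_le_div hT).2 ht)]
  · rw [hderiv]
    refine hdisc _ ⟨Real.smoothTransition.nonneg _, Real.smoothTransition.le_one _⟩ _ ?_
    rw [abs_div, abs_of_pos hT, div_mul_cancel₀ _ hT.ne']
    exact abs_deriv_smoothTransition_le _

theorem hasMinimalDisc_of_ball_subset (hn : 2 ≤ n) (hε : 0 < ε) (hΩ : ball x ε ⊆ Ω)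
    (hu : ‖u‖ ≤ ε) : HasMinimalDisc n Ω x u := by
  have hrank : 1 < Module.rank ℝ (EuclideanSpace ℝ (Fin n)) := by
    rw [← Module.finrank_eq_rank, finrank_euclideanSpace_fin]
    exact_mod_cast hn
  obtain ⟨A, hA, rfl⟩ := exists_isWeaklyConformal_apply_one_eq hrank u
  refine ⟨fun z => x + A z, ?_, fun z hz => hΩ ?_, by simp, by simp⟩
  · obtain ⟨hsmooth, hlap, hconf⟩ := conformalHarmonicOn_const_add hA x
    exact ⟨hsmooth.mono (subset_univ _), fun z _ => hlap z trivial, fun z _ => hconf z trivial⟩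
  · rw [mem_ball_iff_norm, add_sub_cancel_left, isWeaklyConformal_iff_norm_apply.1 hA z]
    exact (mul_le_mul_of_nonneg_right hu (norm_nonneg z)).trans_lt
      (mul_lt_of_lt_one_right hε (mem_ball_zero_iff.1 hz))

theorem subunitJoined_of_mem_closedBall (hn : 2 ≤ n) (hε : 0 < ε) (hΩ : closedBall p (2 * ε) ⊆ Ω)
    (hx : x ∈ closedBall p ε) (hy : y ∈ closedBall p ε) (hT : 0 < T)
    (hxy : smoothTransitionSpeed * ‖y - x‖ ≤ ε * T) : SubunitJoined n Ω T x y := by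
  have hline : ∀ s, HasDerivAt (fun s : ℝ => x + s • (y - x)) (y - x) s := fun s => by
    simpa using ((hasDerivAt_id s).smul_const (y - x)).const_add x
  have hjoined := SubunitJoined.of_curve (Ω := Ω) (c := fun s : ℝ => x + s • (y - x))
    (by fun_prop) hT fun s hs a ha => by
      have hball : ball (x + s • (y - x)) ε ⊆ Ω :=
        (ball_subset_closedBall.trans (closedBall_subset_closedBall' (by
          have := (convex_closedBall p ε).add_smul_sub_mem hx hy hs
          rw [mem_closedBall] at this
          linarith))).trans hΩ
      rw [(hline s).deriv]
      refine hasMinimalDisc_of_ball_subset hn hε hball (le_of_mul_le_mul_right ?_ hT)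
      calc ‖a • (y - x)‖ * T = |a| * T * ‖y - x‖ := by rw [norm_smul, Real.norm_eq_abs]; ring
        _ ≤ smoothTransitionSpeed * ‖y - x‖ := by gcongr
        _ ≤ ε * T := hxy
  simpa using hjoined

theorem exists_forall_mem_sphere_not_subunitJoined (hn : 2 ≤ n) (hε : 0 < ε)
    (hΩ : closedBall p (2 * ε) ⊆ Ω) (hsep : ∀ y ∈ Ω, p ≠ y → 0 < minDist n Ω p y) :
    ∃ T > 0, ∀ y ∈ sphere p ε, ¬SubunitJoined n Ω T p y := by
  refine (isCompact_sphere p ε).induction_on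
    (p := fun s => ∃ T > 0, ∀ y ∈ s, ¬SubunitJoined n Ω T p y) ⟨1, one_pos, by simp⟩ ?_ ?_ ?_
  · rintro s t hst ⟨T, hT, ht⟩
    exact ⟨T, hT, fun y hy => ht y (hst hy)⟩
  · rintro s t ⟨T₁, hT₁, hs⟩ ⟨T₂, hT₂, ht⟩
    refine ⟨min T₁ T₂, lt_min hT₁ hT₂, ?_⟩
    rintro y (hy | hy) hpy
    · exact hs y hy (hpy.mono (min_le_left _ _))
    · exact ht y hy (hpy.mono (min_le_right _ _))
  · intro y hy
    have hpy : 0 < minDist n Ω p y := hsep y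
      (hΩ (closedBall_subset_closedBall (by linarith) (sphere_subset_closedBall hy)))
      (ne_of_mem_sphere hy hε.ne').symm
    set T := minDist n Ω p y / 3
    have hT : 0 < T := by positivity
    have hclose : ∀ᶠ x in 𝓝 y, smoothTransitionSpeed * ‖y - x‖ < ε * T := by
      have hcont : Continuous fun x => smoothTransitionSpeed * ‖y - x‖ := by fun_prop
      exact hcont.continuousAt.eventually_lt_const (by simpa using mul_pos hε hT)
    refine ⟨_, inter_mem self_mem_nhdsWithin (mem_nhdsWithin_of_mem_nhds hclose), T, hT, ?_⟩
    rintro x ⟨hx, hxy⟩ hpx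
    have hjoined := hpx.trans (subunitJoined_of_mem_closedBall hn hε hΩ
      (sphere_subset_closedBall hx) (sphere_subset_closedBall hy) hT hxy.le)
    linarith [hjoined.minDist_le, show minDist n Ω p y = 3 * T by simp only [T]; ring]

end MinimalDistance

/-! ### Maps from the punctured disc -/

section PuncturedDisc

open Set Complex Topology

variable {n : ℕ} {Ω : Set (EuclideanSpace ℝ (Fin n))} {f : ℂ → EuclideanSpace ℝ (Fin n)}
  {p : EuclideanSpace ℝ (Fin n)} {ζ : ℂ} {T ε : ℝ}

theorem sphere_norm_subset_punctured_ball (hζ : ζ ∈ ball (0 : ℂ) 1 \ {0}) :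
    sphere (0 : ℂ) ‖ζ‖ ⊆ ball 0 1 \ {0} := fun w hw => by
  rw [mem_sphere_zero_iff_norm] at hw
  exact ⟨by simpa [hw] using hζ.1, norm_ne_zero_iff.1 (hw ▸ norm_ne_zero_iff.2 hζ.2)⟩

theorem mul_exp_mem_punctured_ball {a : ℂ} (hζ : ζ ≠ 0) (ha : a.re < -Real.log ‖ζ‖) :
    ζ * exp a ∈ ball (0 : ℂ) 1 \ {0} := by
  refine ⟨?_, mul_ne_zero hζ (exp_ne_zero a)⟩
  rw [mem_ball_zero_iff, norm_mul, norm_exp, ← Real.log_neg_iff (by positivity),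
    Real.log_mul (by simpa) (Real.exp_pos _).ne', Real.log_exp]
  linarith

theorem hasMinimalDisc_of_punctured_ball (hf : ConformalHarmonicOn n f (ball 0 1 \ {0}))
    (hfΩ : MapsTo f (ball 0 1 \ {0}) Ω) (hζ : ζ ∈ ball (0 : ℂ) 1 \ {0}) {a : ℂ}
    (ha : ‖a‖ ≤ -Real.log ‖ζ‖) : HasMinimalDisc n Ω (f ζ) (fderiv ℝ f ζ (ζ * a)) := by
  have hopen : IsOpen (ball (0 : ℂ) 1 \ {0}) := isOpen_ball.sdiff isClosed_singleton
  -- `w ↦ ζ * exp w` covers the punctured disc by the half-plane `re w < -log ‖ζ‖`, so that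
  -- `-log ‖ζ‖` is the distance to the boundary from the point `0` over `ζ`.
  set φ : ℂ → ℂ := fun z => ζ * exp (a * z)
  have hφ : Differentiable ℂ φ := by fun_prop
  have hφ₀ : φ 0 = ζ := by simp [φ]
  have hφ' : HasDerivAt φ (ζ * a) 0 := by
    simpa using ((((hasDerivAt_id (0 : ℂ)).const_mul a).cexp).const_mul ζ)
  have hlog : 0 < -Real.log ‖ζ‖ := neg_pos.2 <|
    Real.log_neg (norm_pos_iff.2 hζ.2) (mem_ball_zero_iff.1 hζ.1)
  have hmaps : MapsTo φ (ball 0 1) (ball 0 1 \ {0}) := fun z hz =>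
    mul_exp_mem_punctured_ball hζ.2 <| calc
      (a * z).re ≤ ‖a‖ * ‖z‖ := (re_le_norm _).trans_eq (norm_mul a z)
      _ ≤ -Real.log ‖ζ‖ * ‖z‖ := by gcongr
      _ < -Real.log ‖ζ‖ := mul_lt_of_lt_one_right hlog (mem_ball_zero_iff.1 hz)
  refine ⟨f ∘ φ, hf.comp_differentiableOn hopen hφ.differentiableOn isOpen_ball hmaps,
    hfΩ.comp hmaps, congrArg f hφ₀, ?_⟩
  have hfφ : DifferentiableAt ℝ f (φ 0) := hf.differentiableAt hopen (hφ₀ ▸ hζ)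
  rw [fderiv_comp 0 hfφ (hφ.differentiableAt.restrictScalars (𝕜 := ℝ)),
    hφ.differentiableAt.fderiv_restrictScalars (𝕜 := ℝ), hφ₀]
  simp [hφ'.deriv]

theorem subunitJoined_arc (hf : ConformalHarmonicOn n f (ball 0 1 \ {0}))
    (hfΩ : MapsTo f (ball 0 1 \ {0}) Ω) (hζ : ζ ∈ ball (0 : ℂ) 1 \ {0}) {θ : ℝ} (hT : 0 < T)
    (hθ : smoothTransitionSpeed * |θ| ≤ -Real.log ‖ζ‖ * T) :
    SubunitJoined n Ω T (f ζ) (f (ζ * exp (θ * I))) := by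
  have hopen : IsOpen (ball (0 : ℂ) 1 \ {0}) := isOpen_ball.sdiff isClosed_singleton
  set c : ℝ → ℂ := fun s => ζ * exp (s * (θ * I))
  have hc_norm : ∀ s, ‖c s‖ = ‖ζ‖ := fun s => by simp [c, norm_exp]
  have hc_mem : ∀ s, c s ∈ ball (0 : ℂ) 1 \ {0} := fun s =>
    sphere_norm_subset_punctured_ball hζ (mem_sphere_zero_iff_norm.2 (hc_norm s))
  have hc : ContDiff ℝ 1 c :=
    contDiff_const.mul (ofRealCLM.contDiff.mul contDiff_const).cexp
  have hc' : ∀ s, HasDerivAt c (c s * (θ * I)) s := fun s => by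
    simpa [c, mul_assoc] using
      (((hasDerivAt_id s).ofReal_comp.mul_const (θ * I : ℂ)).cexp).const_mul ζ
  have hfc : ContDiff ℝ 1 (f ∘ c) := contDiff_iff_contDiffAt.2 fun s =>
    ((hf.1.contDiffAt (hopen.mem_nhds (hc_mem s))).of_le one_le_two).comp s hc.contDiffAt
  have hjoined := SubunitJoined.of_curve (Ω := Ω) hfc hT fun s _ a ha => by
    have hderiv : deriv (f ∘ c) s = fderiv ℝ f (c s) (c s * (θ * I)) :=
      ((hf.differentiableAt hopen (hc_mem s)).hasFDerivAt.comp_hasDerivAt s (hc' s)).deriv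
    rw [hderiv, ← map_smul, ← mul_smul_comm, Function.comp_apply]
    refine hasMinimalDisc_of_punctured_ball hf hfΩ (hc_mem s) (le_of_mul_le_mul_right ?_ hT)
    calc ‖a • (θ * I : ℂ)‖ * T = |a| * T * |θ| := by simp; ring
      _ ≤ smoothTransitionSpeed * |θ| := by gcongr
      _ ≤ -Real.log ‖c s‖ * T := by rwa [hc_norm]
  simpa [c] using hjoined

theorem exists_eq_mul_exp_of_norm_eq {w : ℂ} (hw : ‖w‖ = ‖ζ‖) :
    ∃ θ : ℝ, |θ| ≤ Real.pi ∧ w = ζ * exp (θ * I) := by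
  rcases eq_or_ne ζ 0 with rfl | hζ
  · exact ⟨0, by simp [Real.pi_pos.le], by simpa using hw⟩
  refine ⟨arg (w / ζ), abs_arg_le_pi _, ?_⟩
  have hpolar := norm_mul_exp_arg_mul_I (w / ζ)
  rw [norm_div, hw, div_self (norm_ne_zero_iff.2 hζ), ofReal_one, one_mul] at hpolar
  rw [hpolar, mul_div_cancel₀ _ hζ]

theorem dist_lt_of_mem_circle {X : Type*} [PseudoMetricSpace X] {g : ℂ → X} {a : X}
    (hg : ContinuousOn g (sphere 0 ‖ζ‖)) (hsphere : ∀ w ∈ sphere (0 : ℂ) ‖ζ‖, g w ∉ sphere a ε)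
    (hζa : dist (g ζ) a < ε) : ∀ w ∈ sphere (0 : ℂ) ‖ζ‖, dist (g w) a < ε := by
  intro w hw
  by_contra! hwa
  have hconn : IsPreconnected (sphere (0 : ℂ) ‖ζ‖) :=
    isPreconnected_sphere (by simp [rank_real_complex]) 0 ‖ζ‖
  have hdist : ContinuousOn (fun w => dist (g w) a) (sphere 0 ‖ζ‖) :=
    (continuous_id.dist continuous_const).comp_continuousOn hg
  obtain ⟨v, hv, hva⟩ :=
    hconn.intermediate_value (mem_sphere_zero_iff_norm.2 rfl) hw hdist ⟨hζa.le, hwa⟩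
  exact hsphere v hv hva

theorem frequently_forall_mem_circle_dist_lt (hn : 2 ≤ n) (hΩ : IsOpen Ω) (hp : p ∈ Ω)
    (hsep : ∀ y ∈ Ω, p ≠ y → 0 < minDist n Ω p y)
    (hf : ConformalHarmonicOn n f (ball 0 1 \ {0})) (hfΩ : MapsTo f (ball 0 1 \ {0}) Ω)
    (hfp : MapClusterPt p (𝓝[≠] 0) f) (hε : 0 < ε) :
    ∃ᶠ ζ : ℂ in 𝓝[≠] 0, ∀ w ∈ sphere 0 ‖ζ‖, dist (f w) p < ε := by
  obtain ⟨ρ, hρ, hρΩ⟩ := nhds_basis_closedBall.mem_iff.1 (hΩ.mem_nhds hp)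
  set δ := min ε (ρ / 2)
  have hδ : 0 < δ := lt_min hε (half_pos hρ)
  have hδΩ : closedBall p (2 * δ) ⊆ Ω :=
    (closedBall_subset_closedBall (by linarith [min_le_right ε (ρ / 2)])).trans hρΩ
  obtain ⟨T, hT, hnot⟩ := exists_forall_mem_sphere_not_subunitJoined hn hδ hδΩ hsep
  have hnear : ∀ᶠ x in 𝓝 p, dist x p < δ ∧ smoothTransitionSpeed * ‖x - p‖ < δ * (T / 2) := by
    have hcont : Continuous fun x => smoothTransitionSpeed * ‖x - p‖ := by fun_prop
    exact (eventually_of_mem (ball_mem_nhds p hδ) fun _ => id).and <|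
      hcont.continuousAt.eventually_lt_const (by simpa using mul_pos hδ (half_pos hT))
  have hlog : ∀ᶠ ζ : ℂ in 𝓝[≠] 0, smoothTransitionSpeed * Real.pi ≤ -Real.log ‖ζ‖ * (T / 2) :=
    ((tendsto_neg_atBot_atTop.comp (Real.tendsto_log_nhdsGT_zero.comp
      tendsto_norm_nhdsNE_zero)).atTop_mul_const (half_pos hT)).eventually_ge_atTop _
  have hball : ∀ᶠ ζ : ℂ in 𝓝[≠] 0, ζ ∈ ball (0 : ℂ) 1 \ {0} :=
    sdiff_mem_nhdsWithin_compl (ball_mem_nhds 0 one_pos) {0}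
  refine ((hfp.frequently hnear).and_eventually (hlog.and hball)).mono ?_
  rintro ζ ⟨⟨hζp, hsegment⟩, hζlog, hζ⟩ w hw
  have hcont : ContinuousOn f (sphere 0 ‖ζ‖) :=
    hf.1.continuousOn.mono (sphere_norm_subset_punctured_ball hζ)
  refine (dist_lt_of_mem_circle hcont (fun v hv hvp => hnot _ hvp ?_) hζp w hw).trans_le
    (min_le_left _ _)
  obtain ⟨θ, hθ, rfl⟩ := exists_eq_mul_exp_of_norm_eq (mem_sphere_zero_iff_norm.1 hv)
  have harc : smoothTransitionSpeed * |θ| ≤ -Real.log ‖ζ‖ * (T / 2) :=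
    (mul_le_mul_of_nonneg_left hθ
      ((abs_nonneg _).trans (abs_deriv_smoothTransition_le 0))).trans hζlog
  exact add_halves T ▸ (subunitJoined_of_mem_closedBall hn hδ hδΩ (mem_closedBall_self hδ.le)
    hζp.le (half_pos hT) hsegment.le).trans (subunitJoined_arc hf hfΩ hζ (half_pos hT) harc)

theorem tendsto_of_mapClusterPt_of_forall_minDist_pos (hn : 2 ≤ n) (hΩ : IsOpen Ω) (hp : p ∈ Ω)
    (hsep : ∀ y ∈ Ω, p ≠ y → 0 < minDist n Ω p y)
    (hf : ConformalHarmonicOn n f (ball 0 1 \ {0})) (hfΩ : MapsTo f (ball 0 1 \ {0}) Ω)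
    (hfp : MapClusterPt p (𝓝[≠] 0) f) : Tendsto f (𝓝[≠] 0) (𝓝 p) := by
  have hball : ball (0 : ℂ) 1 \ {0} ∈ 𝓝[≠] 0 :=
    sdiff_mem_nhdsWithin_compl (ball_mem_nhds 0 one_pos) {0}
  have hharm := ((conformalHarmonicOn_iff (isOpen_ball.sdiff isClosed_singleton)).1 hf).1
  have hcoord : ∀ i, Tendsto (fun z => f z i) (𝓝[≠] 0) (𝓝 (p i)) := fun i => by
    refine tendsto_of_frequently_forall_mem_circle_abs_sub_le
      (mem_of_superset hball fun z hz => harmonicAt_euclideanSpace.1 (hharm z hz) i) fun ε hε => ?_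
    refine (frequently_forall_mem_circle_dist_lt hn hΩ hp hsep hf hfΩ hfp hε).mono
      fun ζ hζ w hw => ?_
    rw [dist_zero_right] at hw
    calc |f w i - p i| = ‖(f w - p) i‖ := rfl
      _ ≤ ‖f w - p‖ := PiLp.norm_apply_le _ i
      _ ≤ ε := (dist_eq_norm (f w) p ▸ hζ w hw).le
  exact ((PiLp.continuous_toLp 2 _).tendsto _).comp (tendsto_pi_nhds.2 hcoord)

end PuncturedDisc

theorem stmt16_general {n : ℕ} (hn : 2 ≤ n) {Ω : Set (EuclideanSpace ℝ (Fin n))} (hΩ : IsOpen Ω)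
    {p : EuclideanSpace ℝ (Fin n)} (hp : p ∈ Ω)
    (hsep : ∀ y ∈ Ω, p ≠ y → 0 < minDist n Ω p y) {f : ℂ → EuclideanSpace ℝ (Fin n)}
    (hf : ConformalHarmonicOn n f (ball 0 1 \ {0})) (hfΩ : Set.MapsTo f (ball 0 1 \ {0}) Ω)
    (hfp : MapClusterPt p (nhdsWithin 0 {0}ᶜ) f) :
    ∃ F : ℂ → EuclideanSpace ℝ (Fin n),
      ConformalHarmonicOn n F (ball (0 : ℂ) 1) ∧ Set.MapsTo F (ball (0 : ℂ) 1) Ω ∧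
      ∀ z ∈ ball (0 : ℂ) 1 \ {0}, F z = f z := by
  have hF : ∀ z ∈ ball (0 : ℂ) 1 \ {0}, Function.update f 0 p z = f z := fun z hz =>
    Function.update_of_ne hz.2 p f
  have hcont : ContinuousAt (Function.update f 0 p) 0 :=
    continuousAt_update_same.2
      (tendsto_of_mapClusterPt_of_forall_minDist_pos hn hΩ hp hsep hf hfΩ hfp)
  have hharm : ConformalHarmonicOn n (Function.update f 0 p) (ball 0 1 \ {0}) :=
    hf.congr (isOpen_ball.sdiff isClosed_singleton) fun z hz => (hF z hz).symm
  refine ⟨Function.update f 0 p, .of_diff_singleton isOpen_ball hharm hcont, fun z hz => ?_, hF⟩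
  rcases eq_or_ne z 0 with rfl | hz₀
  · rwa [Function.update_self]
  · exact hF z ⟨hz, hz₀⟩ ▸ hfΩ ⟨hz, hz₀⟩

/-- Kwack-type extension theorem for minimal discs: let `Ω ⊆ ℝⁿ` be a hyperbolic domain
and `f : D* → Ω` a conformal harmonic map from the punctured disc. If some sequence
`z_k → 0` satisfies `f(z_k) → p ∈ Ω`, then `f` extends to a conformal harmonic map
`D → Ω`. -/
theorem stmt16 (n : ℕ) (hn : 3 ≤ n) (Ω : Set (EuclideanSpace ℝ (Fin n)))
    (hΩ : IsOpen Ω) (hΩconn : IsConnected Ω) (hhyp : Hyperbolic n Ω)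
    (f : ℂ → EuclideanSpace ℝ (Fin n))
    (hf : ConformalHarmonicOn n f (ball (0:ℂ) 1 \ {0}))
    (hfΩ : Set.MapsTo f (ball (0:ℂ) 1 \ {0}) Ω)
    (zk : ℕ → ℂ) (hzk : ∀ k, zk k ∈ ball (0:ℂ) 1 \ {0})
    (hzk0 : Tendsto zk atTop (nhds 0))
    (p : EuclideanSpace ℝ (Fin n)) (hp : p ∈ Ω)
    (hfp : Tendsto (fun k => f (zk k)) atTop (nhds p)) :
    ∃ F : ℂ → EuclideanSpace ℝ (Fin n),
      ConformalHarmonicOn n F (ball (0:ℂ) 1) ∧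
      Set.MapsTo F (ball (0:ℂ) 1) Ω ∧
      ∀ z ∈ ball (0:ℂ) 1 \ {0}, F z = f z := by
  exact stmt16_general (by omega) hΩ hp (hhyp p hp) hf hfΩ (hfp.mapClusterPt.of_comp
    (tendsto_nhdsWithin_iff.2 ⟨hzk0, .of_forall fun k => (hzk k).2⟩))
end

section
/- Let v : D → (−∞, 0) be a negative C² function on the open unit disc whose Laplacian satisfies |Δv(z)| ≤ C₁ |v(0)| for all z ∈ D, for some constant C₁ > 0. Then |∇v(0)| ≤ (5C₁ + 2) |v(0)|. -/
open Metric

/-- The Laplacian `Δv = v_xx + v_yy` of a function `v : ℂ → ℝ`. -/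
noncomputable def lap (v : ℂ → ℝ) (z : ℂ) : ℝ :=
  fderiv ℝ (fun w => fderiv ℝ v w 1) z 1 +
  fderiv ℝ (fun w => fderiv ℝ v w Complex.I) z Complex.I

/-!
The `k`-th Fourier coefficient `A` of `v` on the circle of radius `r` around `c` satisfies the
Cauchy–Euler equation `r² A'' + r A' - k² A = r² B`, where `B` is the `k`-th coefficient of the
Laplacian, so `|B| ≤ K` as soon as `|Δv| ≤ K`. Integrating from the center, the coefficient of
index `0` differs from `v c` by at most `K r² / 4`, and the coefficient of index `1` differs from
the linear term `r (v_x - i v_y) / 2` by at most `K r² / 3`. As `v` has constant sign, its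
coefficient of index `1` is bounded by the one of index `0`, whence
`r |∇v c| ≤ 2 |v c| + (7/6) K r²`; let `r` tend to the radius of the disc.
-/

section Calculus

open Set Filter MeasureTheory

variable {E : Type*} [NormedAddCommGroup E] [NormedSpace ℝ E]

lemma norm_sub_le_sub_of_norm_deriv_le_deriv {f f' : ℝ → E} {g g' : ℝ → ℝ} {a b : ℝ} (hab : a < b)
    (hf : ContinuousOn f (Icc a b)) (hg : ContinuousOn g (Icc a b))
    (hf' : ∀ x ∈ Ioo a b, HasDerivAt f (f' x) x) (hg' : ∀ x ∈ Ioo a b, HasDerivAt g (g' x) x)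
    (hle : ∀ x ∈ Ioo a b, ‖f' x‖ ≤ g' x) :
    ‖f b - f a‖ ≤ g b - g a := by
  have interior : ∀ x ∈ Ioo a b, ‖f b - f x‖ ≤ g b - g x := by
    intro x hx
    have hsub : Icc x b ⊆ Icc a b := Icc_subset_Icc_left hx.1.le
    have hIoo : ∀ y ∈ Ico x b, y ∈ Ioo a b := fun y hy => ⟨hx.1.trans_le hy.1, hy.2⟩
    exact image_norm_le_of_norm_deriv_right_le_deriv_boundary'
      (f := fun y => f y - f x) (B := fun y => g y - g x)
      ((hf.mono hsub).sub continuousOn_const)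
      (fun y hy => ((hf' y (hIoo y hy)).sub_const _).hasDerivWithinAt) (by simp)
      ((hg.mono hsub).sub continuousOn_const)
      (fun y hy => ((hg' y (hIoo y hy)).sub_const _).hasDerivWithinAt)
      (fun y hy => hle y (hIoo y hy)) (right_mem_Icc.2 hx.2.le)
  have ha : a ∈ Icc a b := left_mem_Icc.2 hab.le
  have hf_lim := (hf a ha).mono_of_mem_nhdsWithin (Icc_mem_nhdsGT hab)
  have hg_lim := (hg a ha).mono_of_mem_nhdsWithin (Icc_mem_nhdsGT hab)
  refine le_of_tendsto_of_tendsto (tendsto_const_nhds.sub hf_lim).norm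
    (tendsto_const_nhds.sub hg_lim) ?_
  filter_upwards [Ioo_mem_nhdsGT hab] with x hx using interior x hx

lemma hasDerivAt_intervalIntegral_of_continuousOn {F F' : ℝ → ℝ → E} {a b x : ℝ} {s : Set ℝ}
    (hs : IsOpen s) (hx : x ∈ s) (hF : ∀ r ∈ s, ContinuousOn (F r) (uIcc a b))
    (hF' : ContinuousOn (Function.uncurry F') (s ×ˢ uIcc a b))
    (hderiv : ∀ r ∈ s, ∀ t ∈ uIcc a b, HasDerivAt (F · t) (F' r t) r) :
    HasDerivAt (fun r => ∫ t in a..b, F r t) (∫ t in a..b, F' x t) x := by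
  obtain ⟨ε, hε, hball⟩ := nhds_basis_closedBall.mem_iff.1 (hs.mem_nhds hx)
  obtain ⟨M, hM⟩ := ((isCompact_closedBall x ε).prod isCompact_uIcc).exists_bound_of_continuousOn
    (hF'.mono (prod_mono_left hball))
  have slice : ContinuousOn (F' x) (uIcc a b) :=
    hF'.comp (Continuous.prodMk_right x).continuousOn fun t ht => ⟨hx, ht⟩
  have measurable {g : ℝ → E} (hg : ContinuousOn g (uIcc a b)) :
      AEStronglyMeasurable g (volume.restrict (uIoc a b)) :=
    (hg.mono uIoc_subset_uIcc).aestronglyMeasurable measurableSet_uIoc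
  refine (intervalIntegral.hasDerivAt_integral_of_dominated_loc_of_deriv_le (bound := fun _ => M)
    (closedBall_mem_nhds x hε) ?_ (hF x hx).intervalIntegrable
    (measurable slice) ?_ intervalIntegrable_const ?_).2
  · filter_upwards [hs.mem_nhds hx] with r hr
    exact measurable (hF r hr)
  · exact .of_forall fun t ht r hr => hM (r, t) ⟨hr, uIoc_subset_uIcc ht⟩
  · exact .of_forall fun t ht r hr => hderiv r (hball hr) t (uIoc_subset_uIcc ht)

lemma continuous_of_continuousOn_uncurry {X Y Z : Type*} [TopologicalSpace X] [TopologicalSpace Y]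
    [TopologicalSpace Z] {G : X → Y → Z} {s : Set X} {x : X}
    (hG : ContinuousOn (Function.uncurry G) (s ×ˢ univ)) (hx : x ∈ s) : Continuous (G x) :=
  hG.comp_continuous (Continuous.prodMk_right x) fun _ => ⟨hx, mem_univ _⟩

variable {F : Type*} [NormedAddCommGroup F] [NormedSpace ℝ F] {f : E → F} {s : Set E} {x : E}

lemma differentiableAt_of_contDiffOn (hs : IsOpen s) (hf : ContDiffOn ℝ 1 f s) (hx : x ∈ s) :
    DifferentiableAt ℝ f x :=
  (hf.differentiableOn one_ne_zero).differentiableAt (hs.mem_nhds hx)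

lemma contDiffOn_one_fderiv (hs : IsOpen s) (hf : ContDiffOn ℝ 2 f s) :
    ContDiffOn ℝ 1 (fderiv ℝ f) s :=
  hf.fderiv_of_isOpen hs le_rfl

lemma continuousOn_fderiv_fderiv (hs : IsOpen s) (hf : ContDiffOn ℝ 2 f s) :
    ContinuousOn (fderiv ℝ (fderiv ℝ f)) s :=
  (contDiffOn_one_fderiv hs hf).continuousOn_fderiv_of_isOpen hs le_rfl

lemma differentiableAt_fderiv_of_contDiffOn (hs : IsOpen s) (hf : ContDiffOn ℝ 2 f s)
    (hx : x ∈ s) : DifferentiableAt ℝ (fderiv ℝ f) x :=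
  differentiableAt_of_contDiffOn hs (contDiffOn_one_fderiv hs hf) hx

end Calculus

section CauchyEuler

open Set

variable {E : Type*} [NormedAddCommGroup E] [NormedSpace ℝ E] {A B C : ℝ → E} {M ρ : ℝ}

lemma norm_sub_le_of_cauchyEuler_index_zero (hρ : 0 < ρ)
    (hA : ∀ s ∈ Icc 0 ρ, HasDerivAt A (B s) s) (hB : ∀ s ∈ Icc 0 ρ, HasDerivAt B (C s) s)
    (hM : ∀ s ∈ Ioo 0 ρ, ‖s ^ 2 • C s + s • B s‖ ≤ M * s ^ 2) :
    ‖A ρ - A 0‖ ≤ M * ρ ^ 2 / 4 := by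
  have norm_deriv_le : ∀ s ∈ Ioo 0 ρ, ‖B s‖ ≤ M * s / 2 := by
    intro s ⟨hs₀, hsρ⟩
    have hP : ∀ t ∈ Icc 0 s, HasDerivAt (fun t => t • B t) (t • C t + (1 : ℝ) • B t) t :=
      fun t ht => (hasDerivAt_id t).smul (hB t ⟨ht.1, ht.2.trans hsρ.le⟩)
    have hQ (t : ℝ) : HasDerivAt (fun t => M * t ^ 2 / 2) (M * t) t :=
      (((hasDerivAt_pow 2 t).const_mul M).div_const 2).congr_deriv (by push_cast; ring)
    have hle : ∀ t ∈ Ioo 0 s, ‖t • C t + (1 : ℝ) • B t‖ ≤ M * t := by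
      intro t ht
      refine le_of_mul_le_mul_left ?_ ht.1
      calc t * ‖t • C t + (1 : ℝ) • B t‖ = ‖t ^ 2 • C t + t • B t‖ := by
            rw [← norm_smul_of_nonneg ht.1.le, smul_add, smul_smul, smul_smul, mul_one, sq]
        _ ≤ M * t ^ 2 := hM t ⟨ht.1, ht.2.trans hsρ⟩
        _ = t * (M * t) := by ring
    have key := norm_sub_le_sub_of_norm_deriv_le_deriv hs₀ (HasDerivAt.continuousOn hP)
      (HasDerivAt.continuousOn fun t _ => hQ t) (fun t ht => hP t (Ioo_subset_Icc_self ht))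
      (fun t _ => hQ t) hle
    rw [zero_smul, sub_zero, norm_smul_of_nonneg hs₀.le] at key
    exact le_of_mul_le_mul_left (key.trans_eq (by ring)) hs₀
  have hQ (s : ℝ) : HasDerivAt (fun s => M * s ^ 2 / 4) (M * s / 2) s :=
    (((hasDerivAt_pow 2 s).const_mul M).div_const 4).congr_deriv (by push_cast; ring)
  simpa using norm_sub_le_sub_of_norm_deriv_le_deriv hρ (HasDerivAt.continuousOn hA)
    (HasDerivAt.continuousOn fun s _ => hQ s) (fun s hs => hA s (Ioo_subset_Icc_self hs))
    (fun s _ => hQ s) norm_deriv_le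

lemma norm_smul_sub_le_of_cauchyEuler_index_one (hρ : 0 < ρ)
    (hA : ∀ s ∈ Icc 0 ρ, HasDerivAt A (B s) s) (hB : ∀ s ∈ Icc 0 ρ, HasDerivAt B (C s) s)
    (hM : ∀ s ∈ Ioo 0 ρ, ‖s ^ 2 • C s + s • B s - A s‖ ≤ M * s ^ 2) :
    ‖ρ • B ρ - A ρ‖ ≤ M * ρ ^ 2 / 3 := by
  have hP : ∀ s ∈ Icc 0 ρ, HasDerivAt (fun s => s ^ 2 • B s - s • A s)
      (s ^ 2 • C s + s • B s - A s) s := by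
    intro s hs
    refine (((hasDerivAt_pow 2 s).smul (hB s hs)).sub
      ((hasDerivAt_id s).smul (hA s hs))).congr_deriv ?_
    simp only [id, Nat.cast_ofNat]
    module
  have hQ (s : ℝ) : HasDerivAt (fun s => M * s ^ 3 / 3) (M * s ^ 2) s :=
    (((hasDerivAt_pow 3 s).const_mul M).div_const 3).congr_deriv (by push_cast; ring)
  have key := norm_sub_le_sub_of_norm_deriv_le_deriv hρ (HasDerivAt.continuousOn hP)
    (HasDerivAt.continuousOn fun s _ => hQ s) (fun s hs => hP s (Ioo_subset_Icc_self hs))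
    (fun s _ => hQ s) hM
  have factor : ρ ^ 2 • B ρ - ρ • A ρ = ρ • (ρ • B ρ - A ρ) := by module
  have scaled : ρ * ‖ρ • B ρ - A ρ‖ ≤ ρ * (M * ρ ^ 2 / 3) := by
    rw [← norm_smul_of_nonneg hρ.le, ← factor]
    calc ‖ρ ^ 2 • B ρ - ρ • A ρ‖ ≤ M * ρ ^ 3 / 3 := by simpa using key
      _ = ρ * (M * ρ ^ 2 / 3) := by ring
  exact le_of_mul_le_mul_left scaled hρ

lemma norm_sub_smul_le_of_cauchyEuler_index_one (hρ : 0 < ρ)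
    (hA : ∀ s ∈ Icc 0 ρ, HasDerivAt A (B s) s) (hB : ∀ s ∈ Icc 0 ρ, HasDerivAt B (C s) s)
    (hM : ∀ s ∈ Ioo 0 ρ, ‖s ^ 2 • C s + s • B s - A s‖ ≤ M * s ^ 2) (hA₀ : A 0 = 0) :
    ‖A ρ - ρ • B 0‖ ≤ M * ρ ^ 2 / 3 := by
  -- The previous lemma bounds the derivative of `A s / s`, which `dslope` extends to `s = 0`.
  have dslope_eq {s : ℝ} (hs : s ≠ 0) : dslope A 0 s = s⁻¹ • A s := by
    simp [dslope_of_ne A hs, slope_def_module, hA₀]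
  have hD : ∀ s ∈ Ioo 0 ρ, HasDerivAt (dslope A 0) ((s ^ 2)⁻¹ • (s • B s - A s)) s := by
    intro s hs
    have h := (hasDerivAt_inv hs.1.ne').smul (hA s (Ioo_subset_Icc_self hs))
    convert h.congr_of_eventuallyEq (f₁ := dslope A 0) ?_ using 1
    · have := hs.1.ne'
      match_scalars <;> field_simp
    · filter_upwards [isOpen_ne.mem_nhds hs.1.ne'] with t ht using dslope_eq ht
  have hcont : ContinuousOn (dslope A 0) (Icc 0 ρ) := by
    intro s hs
    refine ContinuousAt.continuousWithinAt ?_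
    rcases hs.1.eq_or_lt with rfl | h
    · exact continuousAt_dslope_same.2 (hA 0 hs).differentiableAt
    · exact (continuousAt_dslope_of_ne h.ne').2 (hA s hs).continuousAt
  have hle : ∀ s ∈ Ioo 0 ρ, ‖(s ^ 2)⁻¹ • (s • B s - A s)‖ ≤ M / 3 := by
    intro s ⟨hs₀, hsρ⟩
    have hIcc : Icc 0 s ⊆ Icc 0 ρ := Icc_subset_Icc_right hsρ.le
    have h := norm_smul_sub_le_of_cauchyEuler_index_one hs₀ (fun t ht => hA t (hIcc ht))
      (fun t ht => hB t (hIcc ht)) (fun t ht => hM t ⟨ht.1, ht.2.trans hsρ⟩)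
    rw [norm_smul_of_nonneg (by positivity), inv_mul_le_iff₀ (by positivity)]
    exact h.trans_eq (by ring)
  have key := norm_sub_le_sub_of_norm_deriv_le_deriv hρ hcont
    (g := fun s => M / 3 * s) (by fun_prop) hD
    (fun s _ => by simpa using (hasDerivAt_id s).const_mul (M / 3)) hle
  rw [dslope_same, (hA 0 (left_mem_Icc.2 hρ.le)).deriv, dslope_eq hρ.ne'] at key
  calc ‖A ρ - ρ • B 0‖ = ρ * ‖ρ⁻¹ • A ρ - B 0‖ := by
        rw [← norm_smul_of_nonneg hρ.le, smul_sub, smul_inv_smul₀ hρ.ne']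
    _ ≤ ρ * (M / 3 * ρ - M / 3 * 0) := by gcongr
    _ = M * ρ ^ 2 / 3 := by ring

end CauchyEuler

section AngularCoeff

open Set Complex MeasureTheory

/-- The `k`-th Fourier coefficient of the `2π`-periodic function `g`, normalised so that the
coefficient of index `0` is the mean of `g`. -/
noncomputable def angularCoeff (k : ℤ) (g : ℝ → ℝ) : ℂ :=
  (2 * Real.pi)⁻¹ • ∫ θ in (0 : ℝ)..2 * Real.pi, g θ * exp (-(k * I) * θ)

lemma norm_exp_neg_int_mul_I (k : ℤ) (θ : ℝ) : ‖exp (-(k * I) * θ)‖ = 1 := by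
  simp [norm_exp]

lemma hasDerivAt_exp_neg_int_mul_I (k : ℤ) (θ : ℝ) :
    HasDerivAt (fun θ : ℝ => exp (-(k * I) * θ)) (-(k * I) * exp (-(k * I) * θ)) θ := by
  simpa [mul_comm] using (((hasDerivAt_id (θ : ℂ)).const_mul (-(k * I))).cexp).comp_ofReal

lemma exp_neg_int_mul_I_two_pi (k : ℤ) : exp (-(k * I) * (2 * Real.pi : ℝ)) = 1 := by
  rw [← exp_int_mul_two_pi_mul_I (-k)]
  push_cast
  ring_nf

lemma intervalIntegrable_mul_exp_neg_int_mul_I {g : ℝ → ℝ} (hg : Continuous g) (k : ℤ) :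
    IntervalIntegrable (fun θ : ℝ => g θ * exp (-(k * I) * θ)) volume 0 (2 * Real.pi) :=
  Continuous.intervalIntegrable (by fun_prop) _ _

lemma angularCoeff_add {g h : ℝ → ℝ} (hg : Continuous g) (hh : Continuous h) (k : ℤ) :
    angularCoeff k (fun θ => g θ + h θ) = angularCoeff k g + angularCoeff k h := by
  simp only [angularCoeff, ofReal_add, add_mul, ← smul_add]
  rw [intervalIntegral.integral_add (intervalIntegrable_mul_exp_neg_int_mul_I hg k)
    (intervalIntegrable_mul_exp_neg_int_mul_I hh k)]

lemma angularCoeff_const_mul (a : ℝ) (g : ℝ → ℝ) (k : ℤ) :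
    angularCoeff k (fun θ => a * g θ) = a • angularCoeff k g := by
  simp only [angularCoeff, ofReal_mul, mul_assoc, intervalIntegral.integral_const_mul, real_smul]
  exact mul_left_comm ..

lemma angularCoeff_zero_const (a : ℝ) : angularCoeff 0 (fun _ => a) = a := by
  simp only [angularCoeff, mul_inv_rev, Int.cast_zero, zero_mul, neg_zero, exp_zero, mul_one,
    intervalIntegral.integral_const, sub_zero, real_smul, ofReal_mul, ofReal_ofNat, ofReal_inv]
  field_simp

lemma integral_exp_neg_int_mul_I {k : ℤ} (hk : k ≠ 0) :
    ∫ θ in (0 : ℝ)..2 * Real.pi, exp (-(k * I) * θ) = 0 := by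
  rw [integral_exp_mul_complex (by simpa using hk), exp_neg_int_mul_I_two_pi]
  simp

lemma angularCoeff_const_eq_zero {k : ℤ} (hk : k ≠ 0) (a : ℝ) :
    angularCoeff k (fun _ => a) = 0 := by
  simp only [angularCoeff, intervalIntegral.integral_const_mul, integral_exp_neg_int_mul_I hk,
    mul_zero, smul_zero]

lemma norm_angularCoeff_le {g : ℝ → ℝ} {M : ℝ} (hg : ∀ θ, |g θ| ≤ M) (k : ℤ) :
    ‖angularCoeff k g‖ ≤ M := by
  have h := intervalIntegral.norm_integral_le_of_norm_le_const (a := 0) (b := 2 * Real.pi)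
    (f := fun θ : ℝ => g θ * exp (-(k * I) * θ)) (C := M) fun θ _ => by
      simpa only [norm_mul, norm_exp_neg_int_mul_I, mul_one, norm_real,
        Real.norm_eq_abs] using hg θ
  rw [sub_zero, abs_of_pos Real.two_pi_pos] at h
  rw [angularCoeff, norm_smul_of_nonneg (by positivity), inv_mul_le_iff₀ Real.two_pi_pos]
  linarith

lemma norm_angularCoeff_le_norm_angularCoeff_zero {g : ℝ → ℝ} (hg : ∀ θ, g θ ≤ 0) (k : ℤ) :
    ‖angularCoeff k g‖ ≤ ‖angularCoeff 0 g‖ := by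
  have hpi : (0 : ℝ) ≤ (2 * Real.pi)⁻¹ := by positivity
  simp only [angularCoeff, norm_smul_of_nonneg hpi]
  gcongr
  calc ‖∫ θ in (0 : ℝ)..2 * Real.pi, g θ * exp (-(k * I) * θ)‖
      ≤ ∫ θ in (0 : ℝ)..2 * Real.pi, ‖g θ * exp (-(k * I) * θ)‖ :=
        intervalIntegral.norm_integral_le_integral_norm Real.two_pi_pos.le
    _ = -∫ θ in (0 : ℝ)..2 * Real.pi, g θ := by
        simp only [norm_mul, norm_exp_neg_int_mul_I, mul_one, norm_real, Real.norm_eq_abs,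
          abs_of_nonpos (hg _), intervalIntegral.integral_neg]
    _ ≤ ‖∫ θ in (0 : ℝ)..2 * Real.pi, g θ‖ := neg_le_abs _
    _ = ‖∫ θ in (0 : ℝ)..2 * Real.pi, g θ * exp (-((0 : ℤ) * I) * θ)‖ := by
        simp only [Int.cast_zero, zero_mul, neg_zero, exp_zero, mul_one,
          intervalIntegral.integral_ofReal, norm_real]

lemma angularCoeff_deriv {g g' : ℝ → ℝ} (hg : ∀ θ, HasDerivAt g (g' θ) θ) (hg' : Continuous g')
    (hper : g (2 * Real.pi) = g 0) (k : ℤ) :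
    angularCoeff k g' = (k * I) * angularCoeff k g := by
  have hcont : Continuous g := continuous_iff_continuousAt.2 fun θ => (hg θ).continuousAt
  have parts := intervalIntegral.integral_deriv_mul_eq_sub (a := 0) (b := 2 * Real.pi)
    (fun θ _ => (hg θ).ofReal_comp) (fun θ _ => hasDerivAt_exp_neg_int_mul_I k θ)
    (Continuous.intervalIntegrable (by fun_prop) _ _)
    (Continuous.intervalIntegrable (by fun_prop) _ _)
  have swap (θ : ℝ) : (g θ : ℂ) * (-(k * I) * exp (-(k * I) * θ))
      = -(k * I) * (g θ * exp (-(k * I) * θ)) := by ring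
  simp only [swap] at parts
  rw [intervalIntegral.integral_add (intervalIntegrable_mul_exp_neg_int_mul_I hg' k)
    ((intervalIntegrable_mul_exp_neg_int_mul_I hcont k).const_mul _),
    intervalIntegral.integral_const_mul, hper, exp_neg_int_mul_I_two_pi, ofReal_zero, mul_zero,
    exp_zero, sub_self, neg_mul, add_neg_eq_zero] at parts
  rw [angularCoeff, angularCoeff, parts, mul_smul_comm]

lemma angularCoeff_deriv_deriv {g g' g'' : ℝ → ℝ} (hg : ∀ θ, HasDerivAt g (g' θ) θ)
    (hg' : ∀ θ, HasDerivAt g' (g'' θ) θ) (hg'' : Continuous g'')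
    (hper : g (2 * Real.pi) = g 0) (hper' : g' (2 * Real.pi) = g' 0) (k : ℤ) :
    angularCoeff k g'' = -k ^ 2 * angularCoeff k g := by
  have hcont : Continuous g' := continuous_iff_continuousAt.2 fun θ => (hg' θ).continuousAt
  rw [angularCoeff_deriv hg' hg'' hper', angularCoeff_deriv hg hcont hper]
  linear_combination (k ^ 2 * angularCoeff k g : ℂ) * I_sq

lemma hasDerivAt_angularCoeff {G G' : ℝ → ℝ → ℝ} {s : Set ℝ} {r : ℝ} (hs : IsOpen s) (hr : r ∈ s)
    (hG : ∀ ρ ∈ s, Continuous (G ρ)) (hG' : ContinuousOn (Function.uncurry G') (s ×ˢ univ))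
    (hderiv : ∀ ρ ∈ s, ∀ θ, HasDerivAt (G · θ) (G' ρ θ) ρ) (k : ℤ) :
    HasDerivAt (fun ρ => angularCoeff k (G ρ)) (angularCoeff k (G' r)) r := by
  refine (hasDerivAt_intervalIntegral_of_continuousOn
    (F := fun ρ θ => G ρ θ * exp (-(k * I) * θ)) (F' := fun ρ θ => G' ρ θ * exp (-(k * I) * θ))
    hs hr ?_ ?_ ?_).const_smul (2 * Real.pi)⁻¹
  · intro ρ hρ
    have := hG ρ hρ
    fun_prop
  · exact (continuous_ofReal.comp_continuousOn (hG'.mono (prod_mono_right (subset_univ _)))).mul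
      (Continuous.continuousOn (by fun_prop))
  · exact fun ρ hρ θ _ => (hderiv ρ hρ θ).ofReal_comp.mul_const _

lemma angularCoeff_one_circleMap (L : ℂ →L[ℝ] ℝ) :
    angularCoeff 1 (fun θ => L (circleMap 0 1 θ)) = (L 1 - L I * I) / 2 := by
  have apply_circleMap (θ : ℝ) : (L (circleMap 0 1 θ) : ℂ) * exp (-((1 : ℤ) * I) * θ)
      = (L 1 - L I * I) / 2 + (L 1 + L I * I) / 2 * exp (-((2 : ℤ) * I) * θ) := by
    have hL : L (circleMap 0 1 θ) = Real.cos θ * L 1 + Real.sin θ * L I := by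
      have : circleMap 0 1 θ = Real.cos θ • (1 : ℂ) + Real.sin θ • I := by
        simp [circleMap, exp_mul_I]
      simp only [this, map_add, map_smul, smul_eq_mul]
    have hexp : exp (-((1 : ℤ) * I) * θ) = cos θ - sin θ * I := by
      rw [show -((1 : ℤ) * I) * θ = -θ * I by push_cast; ring, exp_mul_I, cos_neg, sin_neg]
      ring
    have hexp_two : exp (-((2 : ℤ) * I) * θ) = (cos θ - sin θ * I) ^ 2 := by
      rw [← hexp, ← exp_nat_mul]; push_cast; ring_nf
    rw [hL, hexp, hexp_two]
    push_cast
    linear_combination (L 1 - L I * I) / 2 * cos_sq_add_sin_sq (θ : ℂ)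
      + (L I * sin θ * cos θ - L 1 * sin θ ^ 2 / 2 - L I * sin θ ^ 2 * I / 2) * I_sq
  simp only [angularCoeff, apply_circleMap]
  rw [intervalIntegral.integral_add (by simp)
    (Continuous.intervalIntegrable (by fun_prop) _ _), intervalIntegral.integral_const_mul,
    integral_exp_neg_int_mul_I two_ne_zero]
  simp only [mul_inv_rev, intervalIntegral.integral_const, sub_zero, real_smul, ofReal_mul,
    ofReal_ofNat, mul_zero, add_zero, ofReal_inv]
  field_simp

lemma norm_le_norm_apply_one_sub_apply_I_mul_I (L : ℂ →L[ℝ] ℝ) : ‖L‖ ≤ ‖L 1 - L I * I‖ := by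
  refine L.opNorm_le_bound (norm_nonneg _) fun z => ?_
  have hz : L z = ((L 1 - L I * I) * z).re := by
    have : z = z.re • (1 : ℂ) + z.im • I := by simp
    conv_lhs => rw [this]
    simp only [map_add, map_smul, smul_eq_mul]
    simp only [mul_re, sub_re, ofReal_re, I_re, mul_zero, ofReal_im, I_im, mul_one, sub_self,
      sub_zero, sub_im, mul_im, add_zero, zero_sub, neg_mul, sub_neg_eq_add]
    ring
  rw [hz, ← norm_mul]
  exact abs_re_le_norm _

lemma norm_le_two_mul_norm_angularCoeff_one (L : ℂ →L[ℝ] ℝ) :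
    ‖L‖ ≤ 2 * ‖angularCoeff 1 (fun θ => L (circleMap 0 1 θ))‖ := by
  rw [angularCoeff_one_circleMap, norm_div, Complex.norm_two, mul_div_cancel₀ _ two_ne_zero]
  exact norm_le_norm_apply_one_sub_apply_I_mul_I L

end AngularCoeff

section PolarCoordinates

open Set Complex Function

lemma lap_eq_of_norm_eq_one {f : ℂ → ℝ} {z u : ℂ} (hf : DifferentiableAt ℝ (fderiv ℝ f) z)
    (hu : ‖u‖ = 1) :
    lap f z = fderiv ℝ (fderiv ℝ f) z u u + fderiv ℝ (fderiv ℝ f) z (u * I) (u * I) := by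
  have fderiv_apply (w : ℂ) :
      fderiv ℝ (fun y => fderiv ℝ f y w) z w = fderiv ℝ (fderiv ℝ f) z w w := by
    simp [fderiv_clm_apply hf (differentiableAt_const w)]
  obtain ⟨a, b, rfl⟩ : ∃ a b : ℝ, u = a • (1 : ℂ) + b • I := ⟨u.re, u.im, by simp⟩
  have mul_I_eq : (a • (1 : ℂ) + b • I) * I = -b • (1 : ℂ) + a • I := by
    apply Complex.ext <;> simp
  have sq_add_sq : a ^ 2 + b ^ 2 = 1 := by
    have h := Complex.sq_norm (a • (1 : ℂ) + b • I)
    rw [hu, one_pow] at h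
    simpa [normSq_apply, ← sq] using h.symm
  rw [lap, fderiv_apply, fderiv_apply, mul_I_eq]
  simp only [map_add, map_smul, add_apply, smul_apply, smul_eq_mul]
  linear_combination
    -(fderiv ℝ (fderiv ℝ f) z 1 1 + fderiv ℝ (fderiv ℝ f) z I I) * sq_add_sq

lemma hasDerivAt_comp_circleMap_radius {E : Type*} [NormedAddCommGroup E] [NormedSpace ℝ E]
    {f : ℂ → E} {c : ℂ} {r θ : ℝ} (hf : DifferentiableAt ℝ f (circleMap c r θ)) :
    HasDerivAt (fun r => f (circleMap c r θ))
      (fderiv ℝ f (circleMap c r θ) (circleMap 0 1 θ)) r := by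
  refine hf.hasFDerivAt.comp_hasDerivAt (f := fun r => circleMap c r θ) r ?_
  simpa [circleMap] using
    (((hasDerivAt_id r).ofReal_comp.mul_const (exp (θ * I))).const_add c)

lemma hasDerivAt_comp_circleMap_angle {E : Type*} [NormedAddCommGroup E] [NormedSpace ℝ E]
    {f : ℂ → E} {c : ℂ} {r θ : ℝ} (hf : DifferentiableAt ℝ f (circleMap c r θ)) :
    HasDerivAt (fun θ => f (circleMap c r θ))
      (fderiv ℝ f (circleMap c r θ) (circleMap 0 r θ * I)) θ :=
  hf.hasFDerivAt.comp_hasDerivAt θ (hasDerivAt_circleMap c r θ)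

lemma circleMap_mem_ball {R r : ℝ} (hr : r ∈ Ioo (-R) R) (c : ℂ) (θ : ℝ) :
    circleMap c r θ ∈ ball c R := by
  simpa [circleMap, abs_lt] using hr

lemma continuousOn_uncurry_comp_circleMap {X : Type*} [TopologicalSpace X] {f : ℂ → X} {c : ℂ}
    {R : ℝ} (hf : ContinuousOn f (ball c R)) :
    ContinuousOn (fun p : ℝ × ℝ => f (circleMap c p.1 p.2)) (Ioo (-R) R ×ˢ univ) := by
  refine hf.comp (f := fun p : ℝ × ℝ => circleMap c p.1 p.2) (Continuous.continuousOn ?_)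
    fun p hp => circleMap_mem_ball hp.1 c p.2
  unfold circleMap
  fun_prop

lemma continuous_comp_circleMap {X : Type*} [TopologicalSpace X] {f : ℂ → X} {c : ℂ} {R r : ℝ}
    (hf : ContinuousOn f (ball c R)) (hr : r ∈ Ioo (-R) R) :
    Continuous fun θ => f (circleMap c r θ) :=
  hf.comp_continuous (continuous_circleMap c r) fun θ => circleMap_mem_ball hr c θ

/-- The derivative of `f` at `c + r e^{iθ}` in the direction `e^{iθ}`, as a function of `r`
and `θ`; at `r = 0` it is the directional derivative at the center. -/
noncomputable def radialDeriv (f : ℂ → ℝ) (c : ℂ) (r θ : ℝ) : ℝ :=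
  fderiv ℝ f (circleMap c r θ) (circleMap 0 1 θ)

/-- The second derivative of `f` at `c + r e^{iθ}` in the direction `e^{iθ}`, that is, the second
`r`-derivative of `f` in polar coordinates around `c`. -/
noncomputable def radialDeriv₂ (f : ℂ → ℝ) (c : ℂ) (r θ : ℝ) : ℝ :=
  fderiv ℝ (fderiv ℝ f) (circleMap c r θ) (circleMap 0 1 θ) (circleMap 0 1 θ)

/-- The second `θ`-derivative of `f (c + r e^{iθ})`. The first-order term is there because the
circle is curved: its acceleration at angle `θ` is `-r e^{iθ}`. -/
noncomputable def angularDeriv₂ (f : ℂ → ℝ) (c : ℂ) (r θ : ℝ) : ℝ :=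
  fderiv ℝ (fderiv ℝ f) (circleMap c r θ) (circleMap 0 r θ * I) (circleMap 0 r θ * I)
    - fderiv ℝ f (circleMap c r θ) (circleMap 0 r θ)

variable {f : ℂ → ℝ} {c : ℂ} {R r : ℝ}

lemma continuousOn_uncurry_radialDeriv (hf : ContDiffOn ℝ 1 f (ball c R)) :
    ContinuousOn (uncurry (radialDeriv f c)) (Ioo (-R) R ×ˢ univ) :=
  (continuousOn_uncurry_comp_circleMap
    (hf.continuousOn_fderiv_of_isOpen isOpen_ball le_rfl)).clm_apply
      (Continuous.continuousOn (by fun_prop))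

lemma continuousOn_uncurry_radialDeriv₂ (hf : ContDiffOn ℝ 2 f (ball c R)) :
    ContinuousOn (uncurry (radialDeriv₂ f c)) (Ioo (-R) R ×ˢ univ) := by
  have hcirc : ContinuousOn (fun p : ℝ × ℝ => circleMap 0 1 p.2) (Ioo (-R) R ×ˢ univ) :=
    Continuous.continuousOn (by fun_prop)
  have hfderiv₂ := continuousOn_uncurry_comp_circleMap (continuousOn_fderiv_fderiv isOpen_ball hf)
  exact (hfderiv₂.clm_apply hcirc).clm_apply hcirc

lemma continuous_angularDeriv₂ (hf : ContDiffOn ℝ 2 f (ball c R)) (hr : r ∈ Ioo (-R) R) :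
    Continuous (angularDeriv₂ f c r) := by
  have hcirc : Continuous fun θ => circleMap 0 r θ * I := by fun_prop
  have hfderiv := continuous_comp_circleMap
    (hf.continuousOn_fderiv_of_isOpen isOpen_ball one_le_two) hr
  have hfderiv₂ := continuous_comp_circleMap (continuousOn_fderiv_fderiv isOpen_ball hf) hr
  exact ((hfderiv₂.clm_apply hcirc).clm_apply hcirc).sub
    (hfderiv.clm_apply (continuous_circleMap 0 r))

lemma hasDerivAt_angularCoeff_circleMap (hf : ContDiffOn ℝ 1 f (ball c R)) (hr : r ∈ Ioo (-R) R)
    (k : ℤ) :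
    HasDerivAt (fun ρ => angularCoeff k fun θ => f (circleMap c ρ θ))
      (angularCoeff k (radialDeriv f c r)) r :=
  hasDerivAt_angularCoeff isOpen_Ioo hr
    (fun _ hρ => continuous_comp_circleMap hf.continuousOn hρ)
    (continuousOn_uncurry_radialDeriv hf)
    (fun _ hρ θ => hasDerivAt_comp_circleMap_radius
      (differentiableAt_of_contDiffOn isOpen_ball hf (circleMap_mem_ball hρ c θ))) k

lemma hasDerivAt_angularCoeff_radialDeriv (hf : ContDiffOn ℝ 2 f (ball c R))
    (hr : r ∈ Ioo (-R) R) (k : ℤ) :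
    HasDerivAt (fun ρ => angularCoeff k (radialDeriv f c ρ))
      (angularCoeff k (radialDeriv₂ f c r)) r := by
  refine hasDerivAt_angularCoeff isOpen_Ioo hr
    (fun ρ hρ => continuous_of_continuousOn_uncurry
      (continuousOn_uncurry_radialDeriv (hf.of_le one_le_two)) hρ)
    (continuousOn_uncurry_radialDeriv₂ hf) (fun ρ hρ θ => ?_) k
  have hdiff := differentiableAt_fderiv_of_contDiffOn isOpen_ball hf (circleMap_mem_ball hρ c θ)
  have h := (hasDerivAt_comp_circleMap_radius hdiff).clm_apply
    (hasDerivAt_const ρ (circleMap 0 1 θ))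
  rwa [map_zero, add_zero] at h

lemma angularCoeff_angularDeriv₂ (hf : ContDiffOn ℝ 2 f (ball c R)) (hr : r ∈ Ioo (-R) R)
    (k : ℤ) :
    angularCoeff k (angularDeriv₂ f c r)
      = -k ^ 2 * angularCoeff k fun θ => f (circleMap c r θ) := by
  refine angularCoeff_deriv_deriv
    (fun θ => hasDerivAt_comp_circleMap_angle
      (differentiableAt_of_contDiffOn isOpen_ball (hf.of_le one_le_two)
        (circleMap_mem_ball hr c θ)))
    (fun θ => ?_) (continuous_angularDeriv₂ hf hr) (by simp [circleMap]) (by simp [circleMap]) k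
  have hdiff := differentiableAt_fderiv_of_contDiffOn isOpen_ball hf (circleMap_mem_ball hr c θ)
  have h := (hasDerivAt_comp_circleMap_angle hdiff).clm_apply
    ((hasDerivAt_circleMap 0 r θ).mul_const I)
  rwa [mul_assoc, I_mul_I, mul_neg_one, map_neg, ← sub_eq_add_neg] at h

lemma sq_mul_lap_circleMap (hf : ContDiffOn ℝ 2 f (ball c R)) (hr : r ∈ Ioo (-R) R) (θ : ℝ) :
    r ^ 2 * lap f (circleMap c r θ)
      = r ^ 2 * radialDeriv₂ f c r θ + r * radialDeriv f c r θ + angularDeriv₂ f c r θ := by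
  have radius_smul : circleMap 0 r θ = r • circleMap 0 1 θ := by simp [circleMap]
  have hdiff := differentiableAt_fderiv_of_contDiffOn isOpen_ball hf (circleMap_mem_ball hr c θ)
  rw [lap_eq_of_norm_eq_one hdiff (u := circleMap 0 1 θ) (by simp), angularDeriv₂, radius_smul]
  simp only [radialDeriv, radialDeriv₂, smul_mul_assoc, map_smul, smul_apply, smul_eq_mul]
  ring

lemma cauchyEuler_angularCoeff (hf : ContDiffOn ℝ 2 f (ball c R)) (hr : r ∈ Ioo (-R) R) (k : ℤ) :
    r ^ 2 • angularCoeff k (radialDeriv₂ f c r) + r • angularCoeff k (radialDeriv f c r)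
        - k ^ 2 * angularCoeff k (fun θ => f (circleMap c r θ))
      = r ^ 2 • angularCoeff k fun θ => lap f (circleMap c r θ) := by
  have h₁ := continuous_of_continuousOn_uncurry
    (continuousOn_uncurry_radialDeriv (hf.of_le one_le_two)) hr
  have h₂ := continuous_of_continuousOn_uncurry
    (continuousOn_uncurry_radialDeriv₂ hf) hr
  have h₃ := continuous_angularDeriv₂ hf hr
  rw [← angularCoeff_const_mul (r ^ 2) fun θ => lap f (circleMap c r θ)]
  simp only [sq_mul_lap_circleMap hf hr]
  rw [angularCoeff_add (by fun_prop) h₃, angularCoeff_add (by fun_prop) (by fun_prop),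
    angularCoeff_const_mul, angularCoeff_const_mul, angularCoeff_angularDeriv₂ hf hr, neg_mul,
    sub_eq_add_neg]

end PolarCoordinates

section GradientEstimate

open Set

variable {f : ℂ → ℝ} {c : ℂ} {K R r : ℝ}

lemma norm_cauchyEuler_angularCoeff_le (hf : ContDiffOn ℝ 2 f (ball c R))
    (hlap : ∀ z ∈ ball c R, |lap f z| ≤ K) (hr : r ∈ Ioo (-R) R) (k : ℤ) :
    ‖r ^ 2 • angularCoeff k (radialDeriv₂ f c r) + r • angularCoeff k (radialDeriv f c r)
        - k ^ 2 * angularCoeff k (fun θ => f (circleMap c r θ))‖ ≤ K * r ^ 2 := by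
  rw [cauchyEuler_angularCoeff hf hr, norm_smul_of_nonneg (sq_nonneg r), mul_comm]
  gcongr
  exact norm_angularCoeff_le (fun θ => hlap _ (circleMap_mem_ball hr c θ)) k

lemma norm_angularCoeff_zero_sub_le (hf : ContDiffOn ℝ 2 f (ball c R))
    (hlap : ∀ z ∈ ball c R, |lap f z| ≤ K) (hr : r ∈ Ioo 0 R) :
    ‖angularCoeff 0 (fun θ => f (circleMap c r θ)) - f c‖ ≤ K * r ^ 2 / 4 := by
  have hmem : ∀ s ∈ Icc 0 r, s ∈ Ioo (-R) R := fun s hs => by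
    constructor <;> linarith [hs.1, hs.2, hr.1, hr.2]
  have h := norm_sub_le_of_cauchyEuler_index_zero hr.1
    (fun s hs => hasDerivAt_angularCoeff_circleMap (hf.of_le one_le_two) (hmem s hs) 0)
    (fun s hs => hasDerivAt_angularCoeff_radialDeriv hf (hmem s hs) 0)
    (fun s hs => by
      simpa using norm_cauchyEuler_angularCoeff_le hf hlap (hmem s (Ioo_subset_Icc_self hs)) 0)
  simpa [angularCoeff_zero_const] using h

lemma norm_angularCoeff_one_sub_le (hf : ContDiffOn ℝ 2 f (ball c R))
    (hlap : ∀ z ∈ ball c R, |lap f z| ≤ K) (hr : r ∈ Ioo 0 R) :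
    ‖angularCoeff 1 (fun θ => f (circleMap c r θ))
        - r • angularCoeff 1 (fun θ => fderiv ℝ f c (circleMap 0 1 θ))‖ ≤ K * r ^ 2 / 3 := by
  have hmem : ∀ s ∈ Icc 0 r, s ∈ Ioo (-R) R := fun s hs => by
    constructor <;> linarith [hs.1, hs.2, hr.1, hr.2]
  have h := norm_sub_smul_le_of_cauchyEuler_index_one hr.1
    (fun s hs => hasDerivAt_angularCoeff_circleMap (hf.of_le one_le_two) (hmem s hs) 1)
    (fun s hs => hasDerivAt_angularCoeff_radialDeriv hf (hmem s hs) 1)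
    (fun s hs => by
      simpa using norm_cauchyEuler_angularCoeff_le hf hlap (hmem s (Ioo_subset_Icc_self hs)) 1)
    (by simpa using angularCoeff_const_eq_zero one_ne_zero (f c))
  have radialDeriv_zero : radialDeriv f c 0 = fun θ => fderiv ℝ f c (circleMap 0 1 θ) := by
    ext θ
    simp [radialDeriv]
  rwa [radialDeriv_zero] at h

lemma mul_norm_fderiv_center_le (hf : ContDiffOn ℝ 2 f (ball c R)) (hneg : ∀ z ∈ ball c R, f z ≤ 0)
    (hlap : ∀ z ∈ ball c R, |lap f z| ≤ K) (hr : r ∈ Ioo 0 R) :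
    r * ‖fderiv ℝ f c‖ ≤ 2 * |f c| + 7 / 6 * (K * r ^ 2) := by
  have hrR : r ∈ Ioo (-R) R := ⟨by linarith [hr.1, hr.2], hr.2⟩
  set a₀ := angularCoeff 0 fun θ => f (circleMap c r θ)
  set a₁ := angularCoeff 1 fun θ => f (circleMap c r θ)
  set b := angularCoeff 1 fun θ => fderiv ℝ f c (circleMap 0 1 θ)
  have mean_le : ‖a₀‖ ≤ |f c| + K * r ^ 2 / 4 := by
    have h := norm_le_norm_add_norm_sub (f c : ℂ) a₀
    rw [norm_sub_rev, Complex.norm_real, Real.norm_eq_abs] at h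
    linarith [norm_angularCoeff_zero_sub_le hf hlap hr]
  have first_mode_le : ‖a₁‖ ≤ ‖a₀‖ :=
    norm_angularCoeff_le_norm_angularCoeff_zero (fun θ => hneg _ (circleMap_mem_ball hrR c θ)) 1
  have deriv_mode_le : r * ‖b‖ ≤ ‖a₁‖ + K * r ^ 2 / 3 := by
    have h := norm_le_norm_add_norm_sub a₁ (r • b)
    rw [norm_smul_of_nonneg hr.1.le] at h
    linarith [norm_angularCoeff_one_sub_le hf hlap hr]
  calc r * ‖fderiv ℝ f c‖ ≤ r * (2 * ‖b‖) := by
        gcongr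
        · exact hr.1.le
        · exact norm_le_two_mul_norm_angularCoeff_one _
    _ ≤ 2 * |f c| + 7 / 6 * (K * r ^ 2) := by linarith

end GradientEstimate

theorem stmt19_general (v : ℂ → ℝ) (c : ℂ) (R K : ℝ) (hR : 0 < R)
    (hC2 : ContDiffOn ℝ 2 v (ball c R)) (hneg : ∀ z ∈ ball c R, v z ≤ 0)
    (hlap : ∀ z ∈ ball c R, |lap v z| ≤ K) :
    ‖fderiv ℝ v c‖ ≤ 2 / R * |v c| + 7 / 6 * (R * K) := by
  have limit_bound : R * ‖fderiv ℝ v c‖ ≤ 2 * |v c| + 7 / 6 * (K * R ^ 2) := by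
    refine le_of_tendsto_of_tendsto (b := nhdsWithin R (Set.Iio R))
      (f := fun r => r * ‖fderiv ℝ v c‖) (g := fun r => 2 * |v c| + 7 / 6 * (K * r ^ 2))
      (ContinuousWithinAt.tendsto (by fun_prop)) (ContinuousWithinAt.tendsto (by fun_prop)) ?_
    filter_upwards [Ioo_mem_nhdsLT hR] with r hr using mul_norm_fderiv_center_le hC2 hneg hlap hr
  refine le_of_mul_le_mul_left (limit_bound.trans_eq ?_) hR
  field_simp

/-- Let `v : D → (−∞, 0)` be a negative `C²` function on the unit disc with
`|Δv(z)| ≤ C₁|v(0)|` for all `z ∈ D`, for some `C₁ > 0`. Then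
`|∇v(0)| ≤ (5C₁ + 2)|v(0)|`. -/
theorem stmt19 (v : ℂ → ℝ) (C₁ : ℝ) (hC₁ : 0 < C₁)
    (hC2 : ContDiffOn ℝ 2 v (ball (0:ℂ) 1))
    (hneg : ∀ z ∈ ball (0:ℂ) 1, v z < 0)
    (hlap : ∀ z ∈ ball (0:ℂ) 1, |lap v z| ≤ C₁ * |v 0|) :
    ‖fderiv ℝ v 0‖ ≤ (5 * C₁ + 2) * |v 0| := by
  have h := stmt19_general v 0 1 _ one_pos hC2 (fun z hz => (hneg z hz).le) hlap
  linarith [mul_nonneg hC₁.le (abs_nonneg (v 0))]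
end
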